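/- arXiv:2001.10360 — 2 statements merged into one kernel-verified Lean document; each statement's English description precedes it below -/
import Mathlib

section
/- Let X and Y be rearrangement-invariant Banach function spaces over ℝⁿ (n ≥ 2). Suppose there is C₁ > 0 such that for every nonnegative measurable f on (0,∞), ‖∫_t^∞ f(s) s^{1/n − 1} ds‖_{Y(0,∞)} ≤ C₁ ‖f‖_{X(0,∞)}. Then there is C₂ > 0, depending only on C₁ and n, such that for every ball B ⊆ ℝⁿ and every u ∈ V¹X(B), one has ‖u − ū_B‖_{Y(B)} ≤ C₂ ‖∇u‖_{X(B)}, where ū_B is the integral mean of u over B. -/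
/-!
The proof reduces the Poincaré inequality to a level-set inequality of Maz'ya type and then to the
one-dimensional kernel operator, without a co-area formula or a Pólya–Szegő principle.

The level-set inequality (`weak_est`) says that a weakly differentiable `u` on a ball `B` of radius
`r` satisfies, for `a < b`,
  `(b - a) |{u ≥ b}|^(1 - 1/n) |{u ≤ a}| ≤ C r^n ∫_{a < u < b} |∇u|`,
with `C` depending on `n` only. For smooth functions (`smooth_est`) it follows by integrating the
derivative along all segments from `{u ≥ b}` to `{u ≤ a}`. Only the part of a segment on which
`a < u < b` counts (`oneD`), and Fubini's theorem with a change of variables leaves a time integral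
of `t^(-n) min(|E|, ω (2rt)^n)`. The general case is the limit of mollifications on slightly
smaller balls (`moll`, `moll_limit`).

If `m` is a median of `u`, one of the two sets has measure at least `|B| / 2`, so `w = |u - m|`
satisfies `(b - a) |{w ≥ b}|^θ ≤ K ∫_{a < w < b} |∇u|` with `θ = 1 - 1/n` and `K` depending on `n`
only (`level_abs`). The increments of `w*` along the dyadic points `|B| / 2^k` are thereby
controlled by the mass of `|∇u|` on disjoint level strips. By rearranging `|∇u|` separately on each
strip and placing the pieces on the dyadic intervals (`glue`), one obtains `F` on `(0, ∞)` with
`‖F‖_X ≤ ‖∇u‖_X` and `w*(t) ≤ 4 K ∫_t^∞ F(s) s^(1/n - 1) ds` (`stepA`). The difference between mean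
and median is bounded in the same form (`stepB`, `stepC`), and the assumed boundedness of the
operator concludes (`poincare_of_level`), with `C₂ = 8 K C₁`.
-/

open MeasureTheory ENNReal Set Filter

noncomputable section

/-- Euclidean space ℝⁿ. -/
abbrev Euc (n : ℕ) := EuclideanSpace ℝ (Fin n)

/-- Nonincreasing rearrangement of an `ℝ≥0∞`-valued function. -/
def rearrE {α : Type*} [MeasurableSpace α] (μ : Measure α) (f : α → ℝ≥0∞) (t : ℝ) : ℝ≥0∞ :=
  sInf {l : ℝ≥0∞ | μ {x | l < f x} ≤ ENNReal.ofReal t}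

/-- Unsigned nonincreasing rearrangement `f*` of a real-valued function. -/
def rearr {α : Type*} [MeasurableSpace α] (μ : Measure α) (f : α → ℝ) (t : ℝ) : ℝ≥0∞ :=
  rearrE μ (fun x => ENNReal.ofReal |f x|) t

/-- `u` is weakly differentiable on the open set `Ω` with weak gradient `V`. -/
def HasWeakGradientOn {n : ℕ} (u : Euc n → ℝ) (V : Euc n → Fin n → ℝ) (Ω : Set (Euc n)) : Prop :=
  LocallyIntegrableOn u Ω volume ∧ (∀ i, LocallyIntegrableOn (fun x => V x i) Ω volume) ∧
    ∀ φ : Euc n → ℝ, ContDiff ℝ (⊤ : ℕ∞) φ → HasCompactSupport φ → tsupport φ ⊆ Ω → ∀ i,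
      ∫ x in Ω, u x * fderiv ℝ φ x (EuclideanSpace.single i 1) = - ∫ x in Ω, V x i * φ x

/-- A rearrangement-invariant Banach function norm over `(α, μ)`, acting on
nonnegative extended-real valued measurable functions (axioms (P1)–(P6)). -/
structure RINorm {α : Type*} [MeasurableSpace α] (μ : Measure α) where
  ρ : (α → ℝ≥0∞) → ℝ≥0∞
  ρ_zero : ρ (fun _ => 0) = 0
  ρ_eq_zero : ∀ f : α → ℝ≥0∞, Measurable f → ρ f = 0 → f =ᵐ[μ] 0
  ρ_smul : ∀ (c : ℝ≥0∞) (f : α → ℝ≥0∞), ρ (fun x => c * f x) = c * ρ f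
  ρ_add : ∀ f g : α → ℝ≥0∞, ρ (fun x => f x + g x) ≤ ρ f + ρ g
  ρ_mono : ∀ f g : α → ℝ≥0∞, (∀ᵐ x ∂μ, f x ≤ g x) → ρ f ≤ ρ g
  ρ_fatou : ∀ F : ℕ → α → ℝ≥0∞, (∀ k x, F k x ≤ F (k + 1) x) →
    ρ (fun x => ⨆ k, F k x) = ⨆ k, ρ (F k)
  ρ_chi : ∀ s : Set α, MeasurableSet s → μ s < ⊤ → ρ (s.indicator 1) < ⊤
  ρ_loc : ∀ s : Set α, MeasurableSet s → μ s < ⊤ →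
    ∃ C : ℝ≥0∞, C ≠ ⊤ ∧ ∀ f : α → ℝ≥0∞, ∫⁻ x in s, f x ∂μ ≤ C * ρ f
  ρ_ri : ∀ f g : α → ℝ≥0∞, rearrE μ f = rearrE μ g → ρ f = ρ g

/-- The associate norm ρ'(g) = sup { ∫ f g dμ : ρ(f) ≤ 1 }. -/
def RINorm.assoc {α : Type*} [MeasurableSpace α] {μ : Measure α} (N : RINorm μ)
    (g : α → ℝ≥0∞) : ℝ≥0∞ :=
  ⨆ (f : α → ℝ≥0∞) (_ : N.ρ f ≤ 1), ∫⁻ x, f x * g x ∂μ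

/-- The norm of a real-valued function on `(β, ν)` in the r.i. space over ℝⁿ whose
representation norm over `(0,∞)` is `N` (Luxemburg representation): ‖f‖ = ρ(f*). -/
def riNorm {β : Type*} [MeasurableSpace β] (N : RINorm (volume.restrict (Ioi (0 : ℝ))))
    (ν : Measure β) (f : β → ℝ) : ℝ≥0∞ :=
  N.ρ (rearr ν f)

/-! ### Rearrangements -/

/-- The Galois-type characterisation of the rearrangement: the distribution function of `f` is
right-continuous, so the infimum defining `rearrE μ f t` is attained. -/
lemma lt_rearrE_iff {α : Type*} [MeasurableSpace α] (μ : Measure α) (f : α → ℝ≥0∞) (t : ℝ)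
    (l : ℝ≥0∞) : l < rearrE μ f t ↔ ENNReal.ofReal t < μ {x | l < f x} := by
  constructor
  · intro h
    by_contra! h'
    exact absurd (sInf_le h' : rearrE μ f t ≤ l) (not_le.mpr h)
  · intro h
    have hl : l < ⊤ := by
      by_contra! h'
      have : l = ⊤ := top_le_iff.mp h'
      simp [this] at h
    obtain ⟨v, hv, hvl, hvt⟩ := exists_seq_strictAnti_tendsto' hl
    have hU : {x | l < f x} = ⋃ k, {x | v k < f x} := by
      ext x
      simp only [mem_ofPred_eq, mem_iUnion]
      constructor
      · intro hx
        exact ((tendsto_order.1 hvt).2 _ hx).exists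
      · rintro ⟨k, hk⟩
        exact (hvl k).1.trans hk
    have hm : Monotone fun k => {x | v k < f x} := by
      intro i j hij x hx
      exact lt_of_le_of_lt (hv.antitone hij) hx
    rw [hU, hm.measure_iUnion, lt_iSup_iff] at h
    obtain ⟨k, hk⟩ := h
    refine lt_of_lt_of_le (hvl k).1 (le_sInf ?_)
    intro b hb
    by_contra! hbk
    refine absurd hb (not_le.mpr (lt_of_lt_of_le hk (measure_mono ?_)))
    intro x hx
    exact hbk.trans hx

lemma rearrE_antitone {α : Type*} [MeasurableSpace α] (μ : Measure α) (f : α → ℝ≥0∞) :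
    Antitone (rearrE μ f) := by
  intro s t hst
  refine sInf_le_sInf ?_
  intro l hl
  exact le_trans hl (ENNReal.ofReal_le_ofReal hst)

lemma volume_ofReal_lt (D : ℝ≥0∞) :
    (volume.restrict (Ioi (0 : ℝ))) {t | ENNReal.ofReal t < D} = D := by
  rw [Measure.restrict_apply (measurableSet_lt ENNReal.measurable_ofReal measurable_const)]
  induction D with
  | top =>
    simp
  | coe D =>
    have : {t : ℝ | ENNReal.ofReal t < (D : ℝ≥0∞)} ∩ Ioi 0 = Ioo 0 (D : ℝ) := by
      ext t
      simp only [mem_inter_iff, mem_ofPred_eq, mem_Ioi, mem_Ioo]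
      constructor
      · rintro ⟨h1, h2⟩
        refine ⟨h2, ?_⟩
        rwa [← ENNReal.ofReal_coe_nnreal, ENNReal.ofReal_lt_ofReal_iff_of_nonneg h2.le] at h1
      · rintro ⟨h1, h2⟩
        refine ⟨?_, h1⟩
        rwa [← ENNReal.ofReal_coe_nnreal, ENNReal.ofReal_lt_ofReal_iff_of_nonneg h1.le]
    rw [this]; simp

/-- A function and its rearrangement are equimeasurable; no measurability of `f` is needed. -/
lemma volume_lt_rearrE {α : Type*} [MeasurableSpace α] (μ : Measure α) (f : α → ℝ≥0∞)
    (l : ℝ≥0∞) : (volume.restrict (Ioi (0 : ℝ))) {t | l < rearrE μ f t} = μ {x | l < f x} := by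
  simp only [lt_rearrE_iff]
  exact volume_ofReal_lt _

lemma rearrE_rearrE {α : Type*} [MeasurableSpace α] (μ : Measure α) (f : α → ℝ≥0∞) :
    rearrE (volume.restrict (Ioi (0 : ℝ))) (rearrE μ f) = rearrE μ f := by
  funext t
  simp only [rearrE.eq_def (volume.restrict (Ioi (0 : ℝ))), volume_lt_rearrE]
  rfl

lemma rearrE_congr_ae {α : Type*} [MeasurableSpace α] {μ : Measure α} {f g : α → ℝ≥0∞}
    (h : f =ᵐ[μ] g) : rearrE μ f = rearrE μ g := by
  funext t
  unfold rearrE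
  congr 1
  ext l
  have : μ {x | l < f x} = μ {x | l < g x} := by
    apply measure_congr
    rw [eventuallyEq_set]
    filter_upwards [h] with x hx
    simp [hx]
  simp only [mem_ofPred_eq, this]

/-- The layer-cake formula with strict superlevel sets, for functions that may take the value `⊤`. -/
lemma lintegral_layercake {α : Type*} [MeasurableSpace α] (μ : Measure α) [SFinite μ]
    {f : α → ℝ≥0∞} (hf : Measurable f) :
    ∫⁻ x, f x ∂μ = ∫⁻ l in Ioi (0 : ℝ), μ {x | ENNReal.ofReal l < f x} := by
  have hm : MeasurableSet {p : α × ℝ | ENNReal.ofReal p.2 < f p.1} :=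
    measurableSet_lt (by fun_prop) (by fun_prop)
  calc ∫⁻ x, f x ∂μ = ∫⁻ x, (∫⁻ l in Ioi (0 : ℝ),
        ({p : α × ℝ | ENNReal.ofReal p.2 < f p.1}.indicator 1 (x, l))) ∂μ := by
        congr 1; funext x
        rw [← volume_ofReal_lt (f x), ← lintegral_indicator_one
          (measurableSet_lt ENNReal.measurable_ofReal measurable_const)]
        rfl
    _ = ∫⁻ l in Ioi (0 : ℝ), (∫⁻ x,
        ({p : α × ℝ | ENNReal.ofReal p.2 < f p.1}.indicator 1 (x, l)) ∂μ) := by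
        rw [lintegral_lintegral_swap]
        exact (Measurable.indicator measurable_one hm).aemeasurable
    _ = _ := by
        congr 1; funext l
        rw [← lintegral_indicator_one (measurableSet_lt measurable_const hf)]
        rfl

lemma lintegral_rearrE {α : Type*} [MeasurableSpace α] (μ : Measure α) [SFinite μ]
    {f : α → ℝ≥0∞} (hf : Measurable f) :
    ∫⁻ t in Ioi (0 : ℝ), rearrE μ f t = ∫⁻ x, f x ∂μ := by
  rw [lintegral_layercake μ hf, lintegral_layercake _ (rearrE_antitone μ f).measurable]
  simp only [volume_lt_rearrE]

lemma rearrE_eq_zero {α : Type*} [MeasurableSpace α] (μ : Measure α) (f : α → ℝ≥0∞) (t : ℝ)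
    (h : μ {x | 0 < f x} ≤ ENNReal.ofReal t) : rearrE μ f t = 0 := by
  by_contra h'
  exact absurd ((lt_rearrE_iff μ f t 0).1 (pos_iff_ne_zero.mpr h')) (not_lt.mpr h)

/-- Local rearrangement. For disjoint sets `E k` with `μ (E k) ≤ d k` there is a single `F` on the
line whose norm does not exceed that of the rearrangement of `g` and whose mass on
`(l k, l k + d k]` is at least that of `g` on `E k`. `F` is the supremum of the rearrangements of
`g · 1_{E k}`, translated to `(l k, l k + d k]`; its distribution function is at most the sum of
those of the `g · 1_{E k}`, hence at most that of `g`. The intervals may overlap. -/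
lemma glue {α ι : Type*} [MeasurableSpace α] [Countable ι]
    (N : RINorm (volume.restrict (Ioi (0 : ℝ)))) (μ : Measure α) [SFinite μ]
    {g : α → ℝ≥0∞} (hg : Measurable g) (E : ι → Set α) (hE : ∀ k, MeasurableSet (E k))
    (hd : Pairwise (Function.onFun Disjoint E)) (l d : ι → ℝ)
    (hEd : ∀ k, μ (E k) ≤ ENNReal.ofReal (d k)) :
    ∃ F : ℝ → ℝ≥0∞, N.ρ F ≤ N.ρ (rearrE μ g) ∧
      ∀ k, ∫⁻ x in E k, g x ∂μ ≤ ∫⁻ s in Ioc (l k) (l k + d k), F s := by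
  set h : ι → ℝ → ℝ≥0∞ := fun k => rearrE μ ((E k).indicator g) with hh
  have hhm : ∀ k, Measurable (h k) := fun k => (rearrE_antitone _ _).measurable
  refine ⟨fun s => ⨆ k, (Ioc (l k) (l k + d k)).indicator (fun s => h k (s - l k)) s, ?_, ?_⟩
  · set F : ℝ → ℝ≥0∞ :=
      fun s => ⨆ k, (Ioc (l k) (l k + d k)).indicator (fun s => h k (s - l k)) s with hF
    have key : ∀ t, (volume.restrict (Ioi (0 : ℝ))) {s | t < F s} ≤ μ {x | t < g x} := by
      intro t
      have h1 : {s | t < F s} ⊆ ⋃ k, {s | 0 < s - l k ∧ t < h k (s - l k)} := by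
        intro s hs
        simp only [hF, mem_ofPred_eq, lt_iSup_iff] at hs
        obtain ⟨k, hk⟩ := hs
        refine mem_iUnion.2 ⟨k, ?_⟩
        by_cases hm : s ∈ Ioc (l k) (l k + d k)
        · rw [indicator_of_mem hm] at hk
          exact ⟨sub_pos.mpr hm.1, hk⟩
        · rw [indicator_of_notMem hm] at hk
          simp at hk
      have h2 : ∀ k, volume {s | 0 < s - l k ∧ t < h k (s - l k)} = μ (E k ∩ {x | t < g x}) := by
        intro k
        have e : {s | 0 < s - l k ∧ t < h k (s - l k)} =
          (fun s => s - l k) ⁻¹' ({s | t < h k s} ∩ Ioi 0) := by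
          ext s; simp [and_comm]
        have hms : MeasurableSet {s | t < h k s} := measurableSet_lt measurable_const (hhm k)
        rw [e, (measurePreserving_sub_right volume (l k)).measure_preimage
          (hms.inter measurableSet_Ioi).nullMeasurableSet, ← Measure.restrict_apply hms,
          volume_lt_rearrE]
        congr 1
        ext x
        by_cases hx : x ∈ E k <;> simp [hx]
      calc (volume.restrict (Ioi (0 : ℝ))) {s | t < F s} ≤ volume {s | t < F s} :=
            Measure.restrict_apply_le _ _
        _ ≤ volume (⋃ k, {s | 0 < s - l k ∧ t < h k (s - l k)}) := measure_mono h1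
        _ ≤ ∑' k, volume {s | 0 < s - l k ∧ t < h k (s - l k)} := measure_iUnion_le _
        _ = ∑' k, μ (E k ∩ {x | t < g x}) := by simp only [h2]
        _ = μ (⋃ k, (E k ∩ {x | t < g x})) := by
            rw [measure_iUnion]
            · intro i j hij
              exact (hd hij).mono inter_subset_left inter_subset_left
            · exact fun k => (hE k).inter (measurableSet_lt measurable_const hg)
        _ ≤ _ := measure_mono (iUnion_subset fun k => inter_subset_right)
    -- A comparison of distribution functions gives one of rearrangements, and `N.ρ F = N.ρ (F*)`.
    rw [N.ρ_ri F _ (rearrE_rearrE _ _).symm]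
    refine N.ρ_mono _ _ (Eventually.of_forall fun t => sInf_le_sInf ?_)
    intro b hb
    exact (key b).trans hb
  · intro k
    calc ∫⁻ x in E k, g x ∂μ = ∫⁻ x, (E k).indicator g x ∂μ := (lintegral_indicator (hE k) _).symm
      _ = ∫⁻ t in Ioi (0 : ℝ), h k t := (lintegral_rearrE μ (hg.indicator (hE k))).symm
      _ ≤ ∫⁻ t, (Ioc 0 (d k)).indicator (h k) t := by
          rw [← lintegral_indicator measurableSet_Ioi]
          refine lintegral_mono fun t => ?_
          by_cases ht : t ∈ Ioc 0 (d k)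
          · rw [indicator_of_mem ht, indicator_of_mem (show t ∈ Ioi 0 from ht.1)]
          · by_cases ht0 : 0 < t
            -- Beyond `d k` the rearrangement of `g · 1_{E k}` vanishes, as `μ (E k) ≤ d k`.
            · have htd : d k < t := by
                by_contra! hc; exact ht ⟨ht0, hc⟩
              have : h k t = 0 := by
                apply rearrE_eq_zero
                refine le_trans (measure_mono ?_) ((hEd k).trans
                  (ENNReal.ofReal_le_ofReal htd.le))
                intro x hx
                by_contra hc
                simp [hc] at hx
              simp [indicator, this]
            · simp [ht0]
      _ = ∫⁻ s, (Ioc 0 (d k)).indicator (h k) (s - l k) := by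
          rw [lintegral_sub_right_eq_self]
      _ = ∫⁻ s in Ioc (l k) (l k + d k), h k (s - l k) := by
          rw [← lintegral_indicator measurableSet_Ioc]
          congr 1; funext s
          simp only [indicator, mem_Ioc, sub_pos, sub_le_iff_le_add']
      _ ≤ _ := by
          refine setLIntegral_mono' measurableSet_Ioc fun s hs => ?_
          refine le_trans ?_ (le_iSup _ k)
          rw [indicator_of_mem hs]

/-! ### From level-set inequalities to the kernel operator -/

lemma rearr_ne_top {α : Type*} [MeasurableSpace α] (μ : Measure α) [IsFiniteMeasure μ]
    {w : α → ℝ} (hw : Measurable w) {t : ℝ} (ht : 0 < t) : rearr μ w t ≠ ⊤ := by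
  intro h
  have h1 : ∀ k : ℕ, ENNReal.ofReal t ≤ μ {x | (k : ℝ≥0∞) < ENNReal.ofReal |w x|} := fun k =>
    ((lt_rearrE_iff μ _ t k).1 (by
      change (k : ℝ≥0∞) < rearr μ w t
      rw [h]; exact ENNReal.natCast_lt_top k)).le
  have h2 : Tendsto (fun k : ℕ => μ {x | (k : ℝ≥0∞) < ENNReal.ofReal |w x|}) atTop
      (nhds (μ (⋂ k : ℕ, {x | (k : ℝ≥0∞) < ENNReal.ofReal |w x|}))) := by
    apply tendsto_measure_iInter_atTop
    · intro k
      exact (measurableSet_lt measurable_const (by fun_prop)).nullMeasurableSet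
    · intro i j hij x hx
      have hij' : (i : ℝ≥0∞) ≤ j := by exact_mod_cast hij
      exact lt_of_le_of_lt hij' (show (j : ℝ≥0∞) < ENNReal.ofReal |w x| from hx)
    · exact ⟨0, measure_ne_top _ _⟩
  have h3 : (⋂ k : ℕ, {x | (k : ℝ≥0∞) < ENNReal.ofReal |w x|}) = ∅ := by
    ext x
    simp only [mem_iInter, mem_ofPred_eq, mem_empty_iff_false, iff_false, not_forall, not_lt]
    obtain ⟨k, hk⟩ := ENNReal.exists_nat_gt (r := ENNReal.ofReal |w x|) ENNReal.ofReal_ne_top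
    exact ⟨k, hk.le⟩
  rw [h3, measure_empty] at h2
  have := ge_of_tendsto h2 (Eventually.of_forall h1)
  simp at this
  linarith

/-- On `(0, 4 q]` the kernel `s ^ (-θ)` is at least a quarter of its value at `q`. -/
lemma kernel_lower {θ q s : ℝ} (hθ0 : 0 ≤ θ) (hθ1 : θ ≤ 1) (hs0 : 0 < s)
    (hs : s ≤ 4 * q) : q ^ (-θ) ≤ 4 * s ^ (-θ) := by
  have hq : 0 < q := by linarith
  have h1 : (4 * q) ^ (-θ) ≤ s ^ (-θ) := Real.rpow_le_rpow_of_nonpos hs0 hs (by linarith)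
  rw [Real.mul_rpow (by norm_num) hq.le] at h1
  have h2 : (4 : ℝ)⁻¹ ≤ 4 ^ (-θ) := by
    rw [← Real.rpow_neg_one]
    exact Real.rpow_le_rpow_of_exponent_le (by norm_num) (by linarith)
  have h3 : 0 < q ^ (-θ) := Real.rpow_pos_of_pos hq _
  nlinarith

/-- A nonnegative function `w` satisfying the level-set inequality `hK` has its rearrangement bounded
pointwise by the kernel operator applied to some `F` with norm at most that of `g*`. With
`p k = L / 2 ^ k`, the increments of `w*` along the `p k` are estimated by `hK` between the levels
`w* (p k)` and `w* (p (k + 1))`, and `glue` places the mass of `g` on the corresponding level strips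
in the disjoint dyadic intervals `(p k, 2 p k]`. -/
lemma stepA {α : Type*} [MeasurableSpace α] (N : RINorm (volume.restrict (Ioi (0 : ℝ))))
    (μ : Measure α) [IsFiniteMeasure μ] {L : ℝ} (hL : 0 < L) (hμ : μ univ = ENNReal.ofReal L)
    {θ : ℝ} (hθ0 : 0 < θ) (hθ1 : θ ≤ 1) {w : α → ℝ} (hw : Measurable w) (hw0 : ∀ x, 0 ≤ w x)
    {g : α → ℝ≥0∞} (hg : Measurable g) (K : ℝ≥0∞)
    (hK : ∀ a b : ℝ, 0 ≤ a → a < b →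
      ENNReal.ofReal (b - a) * μ {x | b ≤ w x} ^ θ ≤ K * ∫⁻ x in {x | a < w x ∧ w x < b}, g x ∂μ) :
    ∃ F : ℝ → ℝ≥0∞, N.ρ F ≤ N.ρ (rearrE μ g) ∧ ∀ t, 0 < t →
      rearr μ w t ≤ K * (4 * ∫⁻ s in Ioi t ∩ Ioi 0, F s * ENNReal.ofReal (s ^ (-θ))) := by
  set p : ℕ → ℝ := fun k => L / 2 ^ k with hp
  have hp0 : ∀ k, 0 < p k := fun k => by positivity
  have hps : ∀ k, p k = 2 * p (k + 1) := fun k => by simp only [hp, pow_succ]; field_simp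
  have hpa : Antitone p := antitone_nat_of_succ_le fun k => by
    have := hps k; have := hp0 (k + 1); linarith
  -- The levels `w* (p k)`, with the lowest one replaced by `0`.
  set a : ℕ → ℝ := fun k => if k = 0 then 0 else (rearr μ w (p k)).toReal with ha
  have haS : ∀ k, ENNReal.ofReal (a (k + 1)) = rearr μ w (p (k + 1)) := fun k => by
    simp only [ha, Nat.add_eq_zero_iff, one_ne_zero, and_false, if_false]
    exact ENNReal.ofReal_toReal (rearr_ne_top μ hw (hp0 _))
  have ha0 : ∀ k, 0 ≤ a k := fun k => by
    simp only [ha]; split_ifs <;> simp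
  have ham : Monotone a := by
    refine monotone_nat_of_le_succ fun k => ?_
    rcases k with _ | k
    · simp [ha]
    · rw [← ENNReal.ofReal_le_ofReal_iff (ha0 _), haS, haS]
      exact rearrE_antitone _ _ (hpa (Nat.le_succ _))
  set E : ℕ → Set α := fun k => {x | a k < w x ∧ w x < a (k + 1)} with hE
  have hEm : ∀ k, MeasurableSet (E k) := fun k =>
    (measurableSet_lt measurable_const hw).inter (measurableSet_lt hw measurable_const)
  have hEd : Pairwise (Function.onFun Disjoint E) := by
    have : ∀ i j, i < j → Disjoint (E i) (E j) := by
      intro i j hij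
      rw [Set.disjoint_left]
      intro x hx hx'
      have : a (i + 1) ≤ a j := ham hij
      exact absurd hx.2 (not_lt.mpr (this.trans hx'.1.le))
    intro i j hij
    rcases lt_or_gt_of_ne hij with h | h
    · exact this _ _ h
    · exact (this _ _ h).symm
  have hEμ : ∀ k, μ (E k) ≤ ENNReal.ofReal (p k) := by
    intro k
    rcases k with _ | k
    · refine (measure_mono (subset_univ _)).trans ?_
      simp [hμ, hp]
    · have h1 : μ {x | rearr μ w (p (k + 1)) < ENNReal.ofReal |w x|} ≤ ENNReal.ofReal (p (k + 1)) := by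
        by_contra! h
        exact lt_irrefl _ ((lt_rearrE_iff μ (fun x => ENNReal.ofReal |w x|) _ _).2 h)
      refine (measure_mono ?_).trans h1
      intro x hx
      rw [mem_ofPred_eq, ← haS, abs_of_nonneg (hw0 x)]
      exact (ENNReal.ofReal_lt_ofReal_iff_of_nonneg (ha0 _)).2 hx.1
  obtain ⟨F, hF1, hF2⟩ := glue N μ hg E hEm hEd p p hEμ
  refine ⟨F, hF1, ?_⟩
  have step : ∀ k, ENNReal.ofReal (a (k + 1) - a k) ≤
      K * (4 * ∫⁻ s in Ioc (p k) (p k + p k), F s * ENNReal.ofReal (s ^ (-θ))) := by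
    intro k
    have hq := hp0 (k + 1)
    rcases (ham (Nat.le_succ k)).eq_or_lt with h | hlt
    · rw [← Nat.succ_eq_add_one, ← h]; simp
    have h1 : ENNReal.ofReal (a (k + 1) - a k) * ENNReal.ofReal (p (k + 1)) ^ θ ≤
        K * ∫⁻ x in E k, g x ∂μ := by
      -- `hK` is used between `a k` and `b`, and `b` increases to `a (k + 1)`: for `b < w* (p (k + 1))`
      -- the set `{b ≤ w}` has measure at least `p (k + 1)`.
      have ht : Tendsto (fun b : ℝ => ENNReal.ofReal (b - a k) * ENNReal.ofReal (p (k + 1)) ^ θ)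
          (nhdsWithin (a (k + 1)) (Iio (a (k + 1))))
          (nhds (ENNReal.ofReal (a (k + 1) - a k) * ENNReal.ofReal (p (k + 1)) ^ θ)) := by
        refine ENNReal.Tendsto.mul_const ?_ (Or.inr ?_)
        · have : Continuous fun b : ℝ => ENNReal.ofReal (b - a k) :=
            ENNReal.continuous_ofReal.comp (by fun_prop)
          exact (this.tendsto _).mono_left nhdsWithin_le_nhds
        · exact ENNReal.rpow_ne_top_of_nonneg hθ0.le ENNReal.ofReal_ne_top
      refine le_of_tendsto ht ?_
      filter_upwards [Ioo_mem_nhdsLT hlt] with b hb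
      have hb0 : 0 ≤ b := (ha0 k).trans hb.1.le
      have h2 : ENNReal.ofReal (p (k + 1)) ≤ μ {x | b ≤ w x} := by
        have : ENNReal.ofReal b < rearr μ w (p (k + 1)) := by
          rw [← haS]; exact (ENNReal.ofReal_lt_ofReal_iff_of_nonneg hb0).2 hb.2
        refine ((lt_rearrE_iff _ _ _ _).1 this).le.trans (measure_mono ?_)
        intro x hx
        rw [mem_ofPred_eq, abs_of_nonneg (hw0 x),
          ENNReal.ofReal_lt_ofReal_iff_of_nonneg hb0] at hx
        exact hx.le
      calc _ ≤ ENNReal.ofReal (b - a k) * μ {x | b ≤ w x} ^ θ := by gcongr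
        _ ≤ K * ∫⁻ x in {x | a k < w x ∧ w x < b}, g x ∂μ := hK _ _ (ha0 k) hb.1
        _ ≤ _ := by
          refine mul_le_mul_right (lintegral_mono_set ?_) _
          intro x hx
          exact ⟨hx.1, hx.2.trans hb.2⟩
    have h3 : ENNReal.ofReal (p (k + 1)) ^ θ * ENNReal.ofReal (p (k + 1) ^ (-θ)) = 1 := by
      rw [ENNReal.ofReal_rpow_of_pos hq, ← ENNReal.ofReal_mul (by positivity),
        ← Real.rpow_add hq]
      simp
    calc ENNReal.ofReal (a (k + 1) - a k)
        = (ENNReal.ofReal (a (k + 1) - a k) * ENNReal.ofReal (p (k + 1)) ^ θ) *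
          ENNReal.ofReal (p (k + 1) ^ (-θ)) := by rw [mul_assoc, h3, mul_one]
      _ ≤ (K * ∫⁻ s in Ioc (p k) (p k + p k), F s) * ENNReal.ofReal (p (k + 1) ^ (-θ)) := by
          exact mul_le_mul_left (h1.trans (mul_le_mul_right (hF2 k) _)) _
      _ = K * ∫⁻ s in Ioc (p k) (p k + p k), F s * ENNReal.ofReal (p (k + 1) ^ (-θ)) := by
          rw [lintegral_mul_const' _ _ ENNReal.ofReal_ne_top, mul_assoc]
      _ ≤ K * ∫⁻ s in Ioc (p k) (p k + p k), 4 * (F s * ENNReal.ofReal (s ^ (-θ))) := by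
          gcongr K * ?_
          refine setLIntegral_mono' measurableSet_Ioc fun s hs => ?_
          have hs0 : 0 < s := (hp0 k).trans hs.1
          have : p (k + 1) ^ (-θ) ≤ 4 * s ^ (-θ) :=
            kernel_lower hθ0.le hθ1 hs0 (by have := hps k; have := hs.2; linarith)
          calc F s * ENNReal.ofReal (p (k + 1) ^ (-θ)) ≤ F s * ENNReal.ofReal (4 * s ^ (-θ)) := by
                gcongr
            _ = _ := by
                rw [ENNReal.ofReal_mul (by norm_num)]
                simp only [ENNReal.ofReal_ofNat]
                ring
      _ = _ := by rw [lintegral_const_mul' _ _ (by norm_num)]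
  intro t ht
  by_cases htL : L ≤ t
  · have : rearr μ w t = 0 := by
      apply rearrE_eq_zero
      refine (measure_mono (subset_univ _)).trans ?_
      rw [hμ]; exact ENNReal.ofReal_le_ofReal htL
    rw [this]; exact zero_le
  push Not at htL
  have hex : ∃ m, p m ≤ t := by
    obtain ⟨m, hm⟩ := pow_unbounded_of_one_lt (L / t) (by norm_num : (1 : ℝ) < 2)
    refine ⟨m, ?_⟩
    simp only [hp]
    rw [div_lt_iff₀ ht] at hm
    rw [div_le_iff₀ (by positivity)]
    linarith
  classical
  obtain ⟨M, hM1, hM2⟩ : ∃ M, p (M + 1) ≤ t ∧ t < p M := by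
    have h1 := Nat.find_spec hex
    have h2 := fun m => Nat.find_min hex (m := m)
    rcases hm : Nat.find hex with _ | M
    · rw [hm] at h1; simp [hp] at h1; linarith
    · exact ⟨M, hm ▸ h1, not_le.1 (h2 M (by omega))⟩
  have hsum : ∀ k, ENNReal.ofReal (a k) = ∑ i ∈ Finset.range k, ENNReal.ofReal (a (i + 1) - a i) := by
    intro k
    rw [← ENNReal.ofReal_sum_of_nonneg (fun i _ => sub_nonneg.2 (ham (Nat.le_succ i))),
      Finset.sum_range_sub]
    simp [ha]
  -- For `p (M + 1) ≤ t < p M` the increments up to level `M + 1` telescope, and the dyadic intervals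
  -- involved all lie in `(t, ∞)`.
  calc rearr μ w t ≤ rearr μ w (p (M + 1)) := rearrE_antitone _ _ hM1
    _ = ∑ i ∈ Finset.range (M + 1), ENNReal.ofReal (a (i + 1) - a i) := by rw [← haS, hsum]
    _ ≤ ∑ i ∈ Finset.range (M + 1),
        K * (4 * ∫⁻ s in Ioc (p i) (p i + p i), F s * ENNReal.ofReal (s ^ (-θ))) :=
        Finset.sum_le_sum fun i _ => step i
    _ = K * (4 * ∫⁻ s in ⋃ i ∈ Finset.range (M + 1), Ioc (p i) (p i + p i),
          F s * ENNReal.ofReal (s ^ (-θ))) := by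
        rw [← Finset.mul_sum, ← Finset.mul_sum, lintegral_biUnion_finset]
        · have : ∀ i j, i < j → Disjoint (Ioc (p i) (p i + p i)) (Ioc (p j) (p j + p j)) := by
            intro i j hij
            rw [Set.disjoint_left]
            intro x hx hx'
            have h1 : p j ≤ p (i + 1) := hpa hij
            have h2 := hps i
            have := hx.1
            have := hx'.2
            linarith
          intro i _ j _ hij
          rcases lt_or_gt_of_ne hij with h | h
          · exact this _ _ h
          · exact (this _ _ h).symm
        · exact fun _ _ => measurableSet_Ioc
    _ ≤ _ := by
        gcongr K * (4 * ?_)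
        refine lintegral_mono_set ?_
        refine iUnion₂_subset fun i hi s hs => ?_
        have : p M ≤ p i := hpa (by simpa [Nat.lt_succ_iff] using hi)
        have := hs.1
        exact ⟨by simp only [mem_Ioi]; linarith, by simp only [mem_Ioi]; linarith⟩

/-- The level-set inequality controls the integral of `w` by that of `g`: the layers of `w` at multiples
of `δ` are summed, using `μ S ≤ L ^ (1 - θ) * (μ S) ^ θ`, and then `δ` tends to `0`. -/
lemma stepB {α : Type*} [MeasurableSpace α]
    (μ : Measure α) [IsFiniteMeasure μ] {L : ℝ} (hL : 0 < L) (hμ : μ univ = ENNReal.ofReal L)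
    {θ : ℝ} (hθ1 : θ ≤ 1) {w : α → ℝ} (hw : Measurable w) (hw0 : ∀ x, 0 ≤ w x)
    {g : α → ℝ≥0∞} (K : ℝ≥0∞)
    (hK : ∀ a b : ℝ, 0 ≤ a → a < b →
      ENNReal.ofReal (b - a) * μ {x | b ≤ w x} ^ θ ≤ K * ∫⁻ x in {x | a < w x ∧ w x < b}, g x ∂μ) :
    ∫⁻ x, ENNReal.ofReal (w x) ∂μ ≤ ENNReal.ofReal (L ^ (1 - θ)) * (K * ∫⁻ x, g x ∂μ) := by
  have main : ∀ δ : ℝ, 0 < δ → ∫⁻ x, ENNReal.ofReal (w x) ∂μ ≤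
      ENNReal.ofReal δ * ENNReal.ofReal L + ENNReal.ofReal (L ^ (1 - θ)) * (K * ∫⁻ x, g x ∂μ) := by
    intro δ hδ
    set S : ℕ → Set α := fun j => {x | ((j : ℝ) + 1) * δ ≤ w x} with hS
    have hSm : ∀ j, MeasurableSet (S j) := fun j => measurableSet_le measurable_const hw
    set E : ℕ → Set α := fun j => {x | (j : ℝ) * δ < w x ∧ w x < ((j : ℝ) + 1) * δ} with hE
    have hEm : ∀ j, MeasurableSet (E j) := fun k =>
      (measurableSet_lt measurable_const hw).inter (measurableSet_lt hw measurable_const)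
    have hEd : Pairwise (Function.onFun Disjoint E) := by
      have : ∀ i j, i < j → Disjoint (E i) (E j) := by
        intro i j hij
        rw [Set.disjoint_left]
        intro x hx hx'
        have h1 : ((i : ℝ) + 1) ≤ j := by exact_mod_cast hij
        have h2 : ((i : ℝ) + 1) * δ ≤ j * δ := by gcongr
        exact absurd hx.2 (not_lt.mpr (h2.trans hx'.1.le))
      intro i j hij
      rcases lt_or_gt_of_ne hij with h | h
      · exact this _ _ h
      · exact (this _ _ h).symm
    have hpt : ∀ x, ENNReal.ofReal (w x) ≤
        ENNReal.ofReal δ + ∑' j, (S j).indicator (fun _ => ENNReal.ofReal δ) x := by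
      intro x
      set M := ⌊w x / δ⌋₊ with hM
      have h1 : w x < (M + 1) * δ := by
        have := Nat.lt_floor_add_one (w x / δ)
        rwa [div_lt_iff₀ hδ] at this
      have h2 : (M : ℝ) * δ ≤ w x := by
        have := Nat.floor_le (div_nonneg (hw0 x) hδ.le)
        rwa [le_div_iff₀ hδ] at this
      calc ENNReal.ofReal (w x) ≤ ENNReal.ofReal (δ + M * δ) :=
            ENNReal.ofReal_le_ofReal (by linarith)
        _ = ENNReal.ofReal δ + ∑ j ∈ Finset.range M, ENNReal.ofReal δ := by
            rw [ENNReal.ofReal_add hδ.le (by positivity), ENNReal.ofReal_mul (by positivity)]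
            simp
        _ = ENNReal.ofReal δ + ∑ j ∈ Finset.range M, (S j).indicator (fun _ => ENNReal.ofReal δ) x := by
            congr 1
            refine Finset.sum_congr rfl fun j hj => ?_
            rw [indicator_of_mem]
            have h3 : ((j : ℝ) + 1) ≤ M := by exact_mod_cast Finset.mem_range.1 hj
            have h4 : ((j : ℝ) + 1) * δ ≤ M * δ := by gcongr
            exact h4.trans h2
        _ ≤ _ := by
            gcongr
            exact ENNReal.sum_le_tsum _
    have hSj : ∀ j, ENNReal.ofReal δ * μ (S j) ≤
        ENNReal.ofReal (L ^ (1 - θ)) * (K * ∫⁻ x in E j, g x ∂μ) := by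
      intro j
      have h1 : μ (S j) ≤ ENNReal.ofReal (L ^ (1 - θ)) * μ (S j) ^ θ := by
        by_cases h0 : μ (S j) = 0
        · rw [h0]; exact zero_le
        calc μ (S j) = μ (S j) ^ (1 - θ) * μ (S j) ^ θ := by
              rw [← ENNReal.rpow_add _ _ h0 (measure_ne_top _ _)]; simp
          _ ≤ μ univ ^ (1 - θ) * μ (S j) ^ θ := by
              gcongr ?_ * _
              exact ENNReal.rpow_le_rpow (measure_mono (subset_univ _)) (by linarith)
          _ = _ := by rw [hμ, ENNReal.ofReal_rpow_of_pos hL]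
      have h2 := hK (j * δ) ((j + 1) * δ) (by positivity) (by nlinarith)
      have h3 : ((j : ℝ) + 1) * δ - j * δ = δ := by ring
      rw [h3] at h2
      calc ENNReal.ofReal δ * μ (S j)
          ≤ ENNReal.ofReal δ * (ENNReal.ofReal (L ^ (1 - θ)) * μ (S j) ^ θ) := by gcongr
        _ = ENNReal.ofReal (L ^ (1 - θ)) * (ENNReal.ofReal δ * μ (S j) ^ θ) := by ring
        _ ≤ _ := by gcongr
    calc ∫⁻ x, ENNReal.ofReal (w x) ∂μ
        ≤ ∫⁻ x, (ENNReal.ofReal δ + ∑' j, (S j).indicator (fun _ => ENNReal.ofReal δ) x) ∂μ :=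
          lintegral_mono hpt
      _ = ENNReal.ofReal δ * ENNReal.ofReal L + ∑' j, ENNReal.ofReal δ * μ (S j) := by
          rw [lintegral_add_left measurable_const, lintegral_const, hμ, lintegral_tsum]
          · congr 2
            funext j
            rw [lintegral_indicator (hSm j), setLIntegral_const]
          · exact fun j => (measurable_const.indicator (hSm j)).aemeasurable
      _ ≤ ENNReal.ofReal δ * ENNReal.ofReal L +
          ∑' j, ENNReal.ofReal (L ^ (1 - θ)) * (K * ∫⁻ x in E j, g x ∂μ) := by
          exact add_le_add_right (ENNReal.tsum_le_tsum hSj) _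
      _ = ENNReal.ofReal δ * ENNReal.ofReal L +
          ENNReal.ofReal (L ^ (1 - θ)) * (K * ∫⁻ x in ⋃ j, E j, g x ∂μ) := by
          rw [ENNReal.tsum_mul_left, ENNReal.tsum_mul_left, lintegral_iUnion hEm hEd]
      _ ≤ _ := by
          exact add_le_add_right (mul_le_mul_right (mul_le_mul_right
            (setLIntegral_le_lintegral _ _) _) _) _
  have ht : Tendsto (fun δ : ℝ => ENNReal.ofReal δ * ENNReal.ofReal L +
      ENNReal.ofReal (L ^ (1 - θ)) * (K * ∫⁻ x, g x ∂μ)) (nhdsWithin 0 (Ioi 0))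
      (nhds (0 * ENNReal.ofReal L + ENNReal.ofReal (L ^ (1 - θ)) * (K * ∫⁻ x, g x ∂μ))) := by
    refine Tendsto.add_const _ (ENNReal.Tendsto.mul_const ?_ (Or.inr ENNReal.ofReal_ne_top))
    have : Tendsto ENNReal.ofReal (nhds 0) (nhds 0) := by
      simpa using ENNReal.continuous_ofReal.tendsto 0
    exact this.mono_left nhdsWithin_le_nhds
  have := ge_of_tendsto ht (by filter_upwards [self_mem_nhdsWithin] with δ hδ using main δ hδ)
  simpa using this

/-- The constant `L ^ (-θ) * ∫ g` is dominated on `(0, L)` by the kernel operator: all the mass of `g`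
is placed on `(L, 2 L]` by `glue`. -/
lemma stepC {α : Type*} [MeasurableSpace α] (N : RINorm (volume.restrict (Ioi (0 : ℝ))))
    (μ : Measure α) [IsFiniteMeasure μ] {L : ℝ} (hL : 0 < L) (hμ : μ univ = ENNReal.ofReal L)
    {θ : ℝ} (hθ0 : 0 < θ) (hθ1 : θ ≤ 1)
    {g : α → ℝ≥0∞} (hg : Measurable g) :
    ∃ F : ℝ → ℝ≥0∞, N.ρ F ≤ N.ρ (rearrE μ g) ∧ ∀ t, 0 < t → t < L →
      ENNReal.ofReal (L ^ (-θ)) * ∫⁻ x, g x ∂μ ≤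
        4 * ∫⁻ s in Ioi t ∩ Ioi 0, F s * ENNReal.ofReal (s ^ (-θ)) := by
  obtain ⟨F, hF1, hF2⟩ := glue N μ hg (fun _ : Unit => univ) (fun _ => MeasurableSet.univ)
    (fun i j hij => absurd (Subsingleton.elim i j) hij) (fun _ => L) (fun _ => L)
    (fun _ => hμ.le)
  refine ⟨F, hF1, fun t ht htL => ?_⟩
  have hF := hF2 ()
  rw [Measure.restrict_univ] at hF
  calc ENNReal.ofReal (L ^ (-θ)) * ∫⁻ x, g x ∂μ
      ≤ ENNReal.ofReal (L ^ (-θ)) * ∫⁻ s in Ioc L (L + L), F s := by gcongr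
    _ = ∫⁻ s in Ioc L (L + L), ENNReal.ofReal (L ^ (-θ)) * F s := by
        rw [lintegral_const_mul' _ _ ENNReal.ofReal_ne_top]
    _ ≤ ∫⁻ s in Ioc L (L + L), 4 * (F s * ENNReal.ofReal (s ^ (-θ))) := by
        refine setLIntegral_mono' measurableSet_Ioc fun s hs => ?_
        have hs0 : 0 < s := hL.trans hs.1
        have : L ^ (-θ) ≤ 4 * s ^ (-θ) :=
          kernel_lower hθ0.le hθ1 hs0 (by have := hs.2; linarith)
        calc ENNReal.ofReal (L ^ (-θ)) * F s ≤ ENNReal.ofReal (4 * s ^ (-θ)) * F s := by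
              gcongr
          _ = _ := by
              rw [ENNReal.ofReal_mul (by norm_num)]
              simp only [ENNReal.ofReal_ofNat]
              ring
    _ = 4 * ∫⁻ s in Ioc L (L + L), F s * ENNReal.ofReal (s ^ (-θ)) := by
        rw [lintegral_const_mul' _ _ (by norm_num)]
    _ ≤ _ := by
        gcongr 4 * ?_
        refine lintegral_mono_set fun s hs => ?_
        have := hs.1
        exact ⟨by simp only [mem_Ioi]; linarith, by simp only [mem_Ioi]; linarith⟩

/-! ### The level-set inequality for smooth functions -/

/-- A `C¹` function on `[0, 1]` that descends from `b` or above to `a` or below has variation at least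
`b - a` on the set where its values lie strictly between `a` and `b`. The interval from the last
time at or above `b` to the first time at or below `a` lies in that set. -/
lemma oneD {h : ℝ → ℝ} (hh : ContDiff ℝ 1 h) {a b : ℝ} (hab : a < b) (h0 : b ≤ h 0)
    (h1 : h 1 ≤ a) :
    ENNReal.ofReal (b - a) ≤
      ∫⁻ t in Ioo (0 : ℝ) 1 ∩ {t | a < h t ∧ h t < b}, ‖deriv h t‖ₑ := by
  have hc : Continuous h := hh.continuous
  obtain ⟨s1, ⟨hs1, hs1a⟩, hs1m⟩ := (isCompact_Icc.inter_right
    (isClosed_le hc continuous_const : IsClosed {t | h t ≤ a})).exists_isLeast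
    ⟨1, ⟨zero_le_one, le_rfl⟩, h1⟩
  obtain ⟨s0, ⟨hs0, hs0b⟩, hs0m⟩ := ((isCompact_Icc (a := (0 : ℝ)) (b := s1)).inter_right
    (isClosed_le continuous_const hc : IsClosed {t | b ≤ h t})).exists_isGreatest
    ⟨0, ⟨le_rfl, hs1.1⟩, h0⟩
  simp only [mem_ofPred_eq] at hs1a hs0b
  have hlt : s0 < s1 := by
    refine lt_of_le_of_ne hs0.2 ?_
    rintro rfl
    linarith
  have hsub : Ioo s0 s1 ⊆ Ioo (0 : ℝ) 1 ∩ {t | a < h t ∧ h t < b} := by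
    intro t ht
    have t0 : 0 < t := lt_of_le_of_lt hs0.1 ht.1
    have t1 : t < 1 := lt_of_lt_of_le ht.2 hs1.2
    refine ⟨⟨t0, t1⟩, ?_, ?_⟩
    · by_contra! hcon
      exact absurd (hs1m ⟨⟨t0.le, t1.le⟩, hcon⟩) (not_le.mpr ht.2)
    · by_contra! hcon
      exact absurd (hs0m ⟨⟨t0.le, ht.2.le⟩, hcon⟩) (not_le.mpr ht.1)
  have hd : Continuous (deriv h) := hh.continuous_deriv le_rfl
  have hint : ∫ t in s0..s1, deriv h t = h s1 - h s0 :=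
    intervalIntegral.integral_deriv_eq_sub
      (fun x _ => (hh.differentiable one_ne_zero).differentiableAt) (hd.intervalIntegrable _ _)
  calc ENNReal.ofReal (b - a) ≤ ENNReal.ofReal ‖h s1 - h s0‖ := by
        apply ENNReal.ofReal_le_ofReal
        rw [Real.norm_eq_abs, abs_sub_comm]
        exact le_trans (by linarith) (le_abs_self _)
    _ = ‖∫ t in Ioc s0 s1, deriv h t‖ₑ := by
        rw [ofReal_norm, ← hint, intervalIntegral.integral_of_le hlt.le]
    _ ≤ ∫⁻ t in Ioc s0 s1, ‖deriv h t‖ₑ := enorm_integral_le_lintegral_enorm _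
    _ = ∫⁻ t in Ioo s0 s1, ‖deriv h t‖ₑ := by rw [restrict_Ioo_eq_restrict_Ioc]
    _ ≤ _ := lintegral_mono_set hsub

/-- The time integral arising in `smooth_est`. It is split at `T`; the minimum is bounded by `A * t ^ n`
before `T` and by `e` after. -/
lemma Jint {n : ℕ} (hn : 2 ≤ n) {A e T : ℝ} (hA : 0 ≤ A) (he : 0 ≤ e) (hT : 0 < T) :
    ∫⁻ t in Ioo (0 : ℝ) 1, ENNReal.ofReal ((t ^ n)⁻¹) *
      min (ENNReal.ofReal e) (ENNReal.ofReal (A * t ^ n)) ≤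
      ENNReal.ofReal (A * T + e / T ^ (n - 1)) := by
  have hsub : Ioo (0 : ℝ) 1 ⊆ Ioc 0 T ∪ Ioi T := by
    intro t ht
    by_cases h : t ≤ T
    · exact Or.inl ⟨ht.1, h⟩
    · exact Or.inr (not_le.1 h)
  refine (lintegral_mono_set hsub).trans ((lintegral_union_le _ _ _).trans ?_)
  rw [ENNReal.ofReal_add (by positivity) (by positivity)]
  refine add_le_add ?_ ?_
  · calc _ ≤ ∫⁻ t in Ioc (0 : ℝ) T, ENNReal.ofReal A := by
          refine setLIntegral_mono' measurableSet_Ioc fun t ht => ?_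
          have ht0 : 0 < t := ht.1
          calc _ ≤ ENNReal.ofReal ((t ^ n)⁻¹) * ENNReal.ofReal (A * t ^ n) := by
                gcongr; exact min_le_right _ _
            _ = ENNReal.ofReal A := by
                rw [← ENNReal.ofReal_mul (by positivity)]
                congr 1; field_simp
      _ = _ := by
          rw [setLIntegral_const, Real.volume_Ioc, ← ENNReal.ofReal_mul hA, sub_zero]
  · have hn1 : (-(n : ℝ)) < -1 := by
      have : (2 : ℝ) ≤ n := by exact_mod_cast hn
      linarith
    have hi := integrableOn_Ioi_rpow_of_lt hn1 hT
    calc _ ≤ ∫⁻ t in Ioi T, ENNReal.ofReal e * ENNReal.ofReal (t ^ (-(n : ℝ))) := by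
          refine setLIntegral_mono' measurableSet_Ioi fun t ht => ?_
          have ht0 : 0 < t := hT.trans ht
          rw [mul_comm, Real.rpow_neg ht0.le, Real.rpow_natCast]
          gcongr; exact min_le_left _ _
      _ = ENNReal.ofReal e * ENNReal.ofReal (∫ t in Ioi T, t ^ (-(n : ℝ))) := by
          rw [lintegral_const_mul' _ _ ENNReal.ofReal_ne_top,
            ofReal_integral_eq_lintegral_ofReal hi]
          filter_upwards [ae_restrict_mem measurableSet_Ioi] with t ht
          exact Real.rpow_nonneg (hT.trans ht).le _
      _ ≤ _ := by
          rw [integral_Ioi_rpow_of_lt hn1 hT, ← ENNReal.ofReal_mul he, div_eq_mul_inv e]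
          apply ENNReal.ofReal_le_ofReal
          gcongr
          have h2 : (2 : ℝ) ≤ n := by exact_mod_cast hn
          have h3 : T ^ (-(n : ℝ) + 1) = (T ^ (n - 1))⁻¹ := by
            rw [← Real.rpow_natCast, ← Real.rpow_neg hT.le]
            congr 1
            rw [Nat.cast_sub (by omega)]
            push_cast; ring
          rw [h3]
          have h4 : 0 < (T ^ (n - 1))⁻¹ := by positivity
          rw [div_le_iff_of_neg (by linarith)]
          nlinarith

/-- The change of variables `y = x + t (z - x)`, with Jacobian `t ^ n`. -/
lemma lintegral_segment {n : ℕ} (x : Euc n) {t : ℝ} (ht : 0 < t) {Φ : Euc n → ℝ≥0∞}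
    (hΦ : Measurable Φ) :
    ∫⁻ z, Φ (x + t • (z - x)) = ENNReal.ofReal ((t ^ n)⁻¹) * ∫⁻ y, Φ y := by
  rw [lintegral_sub_right_eq_self (fun z => Φ (x + t • z)) x]
  have h := Measure.map_addHaar_smul (volume : Measure (Euc n)) ht.ne'
  have h2 : ∫⁻ z, Φ (x + t • z) = ∫⁻ y, Φ (x + y) ∂(Measure.map (fun z : Euc n => t • z) volume) := by
    rw [lintegral_map (by fun_prop) (by fun_prop)]
  rw [h2]
  change ∫⁻ y, Φ (x + y) ∂(Measure.map (t • ·) volume) = _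
  rw [h, lintegral_smul_measure, lintegral_add_left_eq_self]
  simp [abs_of_pos ht]

/-- The level-set inequality for smooth functions. `oneD` is applied on every segment from a point of
`E = {b ≤ v}` to a point of `F = {v ≤ a}`, and the result is integrated over `E × F`. At a fixed
time `t` the points `x ∈ E` whose segments can pass through a given `y` fill a set of measure at
most `min |E| |B(y, 2rt)|`, while the change of variables costs `t ^ (-n)`. -/
lemma smooth_est {n : ℕ} (hn : 2 ≤ n) (c : Euc n) {r : ℝ} (hr : 0 < r) {v : Euc n → ℝ}
    (hv : ContDiff ℝ 1 v) {G : Euc n → ℝ≥0∞} (hGm : Measurable G)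
    (hG : ∀ x ∈ Metric.ball c r, ‖fderiv ℝ v x‖ₑ ≤ G x) {a b : ℝ} (hab : a < b) :
    ENNReal.ofReal (b - a) * volume (Metric.ball c r ∩ {x | b ≤ v x}) ^ (1 - (1 : ℝ) / n) *
        volume (Metric.ball c r ∩ {x | v x ≤ a}) ≤
      ENNReal.ofReal (2 * ((volume (Metric.ball (0 : Euc n) 1)).toReal * 2 ^ n + 1) * r ^ n) *
        ∫⁻ x in Metric.ball c r ∩ {x | a < v x ∧ v x < b}, G x := by
  have hvm : Measurable v := hv.continuous.measurable
  set B := Metric.ball c r with hB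
  have hBm : MeasurableSet B := Metric.isOpen_ball.measurableSet
  have hSm : MeasurableSet (B ∩ {x | a < v x ∧ v x < b}) :=
    hBm.inter ((measurableSet_lt measurable_const hvm).inter
      (measurableSet_lt hvm measurable_const))
  set H : Euc n → ℝ≥0∞ := (B ∩ {x | a < v x ∧ v x < b}).indicator G with hH
  have hHm : Measurable H := hGm.indicator hSm
  rw [← lintegral_indicator hSm]
  set E := B ∩ {x | b ≤ v x} with hE
  set F := B ∩ {x | v x ≤ a} with hF
  have hEm : MeasurableSet E := hBm.inter (measurableSet_le measurable_const hvm)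
  have hFm : MeasurableSet F := hBm.inter (measurableSet_le hvm measurable_const)
  set ω := (volume (Metric.ball (0 : Euc n) 1)).toReal with hω
  have hω' : volume (Metric.ball (0 : Euc n) 1) = ENNReal.ofReal ω :=
    (ENNReal.ofReal_toReal measure_ball_lt_top.ne).symm
  have hω0 : 0 ≤ ω := ENNReal.toReal_nonneg
  have hEtop : volume E ≠ ⊤ :=
    ((measure_mono inter_subset_left).trans_lt (measure_ball_lt_top (x := c) (r := r))).ne
  have hn0 : (0 : ℝ) < n := by exact_mod_cast (by omega : 0 < n)
  by_cases hE0 : volume E = 0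
  · have : (0 : ℝ) < 1 - 1 / n := by
      have : (2 : ℝ) ≤ n := by exact_mod_cast hn
      rw [sub_pos, div_lt_one hn0]; linarith
    rw [hE0, ENNReal.zero_rpow_of_pos this]; simp
  set e := (volume E).toReal with he
  have he' : volume E = ENNReal.ofReal e := (ENNReal.ofReal_toReal hEtop).symm
  have hepos : 0 < e := ENNReal.toReal_pos hE0 hEtop
  -- the mean value estimate along segments from `E` to `F`
  have hpt : ∀ x ∈ E, ∀ z ∈ F, ENNReal.ofReal (b - a) ≤
      ∫⁻ t in Ioo (0 : ℝ) 1, H (x + t • (z - x)) * ENNReal.ofReal (2 * r) := by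
    intro x hx z hz
    have hh : ContDiff ℝ 1 fun t : ℝ => v (x + t • (z - x)) := by fun_prop
    have h1 := oneD hh hab (by simpa using hx.2) (by simpa using hz.2)
    have hm : MeasurableSet {t : ℝ | a < v (x + t • (z - x)) ∧ v (x + t • (z - x)) < b} :=
      (measurableSet_lt measurable_const hh.continuous.measurable).inter
        (measurableSet_lt hh.continuous.measurable measurable_const)
    refine h1.trans ?_
    rw [← lintegral_indicator measurableSet_Ioo,
      ← lintegral_indicator (measurableSet_Ioo.inter hm)]
    refine lintegral_mono fun t => ?_
    by_cases ht : t ∈ Ioo (0 : ℝ) 1 ∩ {t : ℝ | a < v (x + t • (z - x)) ∧ v (x + t • (z - x)) < b}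
    · rw [indicator_of_mem ht, indicator_of_mem ht.1]
      have ht01 : t ∈ Icc (0 : ℝ) 1 := ⟨ht.1.1.le, ht.1.2.le⟩
      have hy : x + t • (z - x) ∈ B :=
        (convex_ball c r).add_smul_sub_mem hx.1 hz.1 ht01
      have hyH : H (x + t • (z - x)) = G (x + t • (z - x)) :=
        indicator_of_mem (show x + t • (z - x) ∈ B ∩ {x | a < v x ∧ v x < b} from ⟨hy, ht.2⟩) _
      have hd : HasDerivAt (fun t : ℝ => v (x + t • (z - x)))
          (fderiv ℝ v (x + t • (z - x)) (z - x)) t := by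
        have h2 : HasDerivAt (fun t : ℝ => x + t • (z - x)) (z - x) t := by
          simpa using ((hasDerivAt_id t).smul_const (z - x)).const_add x
        exact ((hv.differentiable one_ne_zero) _).hasFDerivAt.comp_hasDerivAt t h2
      rw [hd.deriv, hyH]
      refine (ContinuousLinearMap.le_opENorm _ _).trans ?_
      gcongr
      · exact hG _ hy
      · rw [← ofReal_norm]
        apply ENNReal.ofReal_le_ofReal
        rw [← dist_eq_norm]
        have h3 := dist_triangle_right z x c
        have h4 := Metric.mem_ball.1 hx.1
        have h5 := Metric.mem_ball.1 hz.1
        linarith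
    · rw [indicator_of_notMem ht]; exact zero_le
  have hA : ∀ t ∈ Ioo (0 : ℝ) 1, ∫⁻ x in E, ∫⁻ z in F, H (x + t • (z - x)) ≤
      (ENNReal.ofReal ((t ^ n)⁻¹) *
        min (ENNReal.ofReal e) (ENNReal.ofReal (ω * (2 * r) ^ n * t ^ n))) * ∫⁻ y, H y := by
    intro t ht
    have ht0 : 0 < t := ht.1
    have hD : MeasurableSet {q : Euc n × Euc n | dist q.2 q.1 < 2 * r * t} :=
      measurableSet_lt (by fun_prop) measurable_const
    have h1 : ∀ x ∈ E, ∫⁻ z in F, H (x + t • (z - x)) ≤ ENNReal.ofReal ((t ^ n)⁻¹) *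
        ∫⁻ y, (Metric.ball x (2 * r * t)).indicator H y := by
      intro x hx
      rw [← lintegral_segment x ht0 (hHm.indicator Metric.isOpen_ball.measurableSet),
        ← lintegral_indicator hFm]
      refine lintegral_mono fun z => ?_
      by_cases hz : z ∈ F
      · rw [indicator_of_mem hz, indicator_of_mem]
        have h3 := dist_triangle_right z x c
        have h4 := Metric.mem_ball.1 hx.1
        have h5 := Metric.mem_ball.1 hz.1
        rw [Metric.mem_ball, dist_eq_norm, add_sub_cancel_left, norm_smul, Real.norm_eq_abs,
          abs_of_pos ht0, ← dist_eq_norm]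
        nlinarith
      · rw [indicator_of_notMem hz]; exact zero_le
    calc ∫⁻ x in E, ∫⁻ z in F, H (x + t • (z - x))
        ≤ ∫⁻ x in E, ENNReal.ofReal ((t ^ n)⁻¹) *
          ∫⁻ y, (Metric.ball x (2 * r * t)).indicator H y := setLIntegral_mono' hEm h1
      _ = ENNReal.ofReal ((t ^ n)⁻¹) *
          ∫⁻ x in E, ∫⁻ y, (Metric.ball x (2 * r * t)).indicator H y :=
          lintegral_const_mul' _ _ ENNReal.ofReal_ne_top
      _ = ENNReal.ofReal ((t ^ n)⁻¹) *
          ∫⁻ y, ∫⁻ x in E, (Metric.ball x (2 * r * t)).indicator H y := by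
          rw [lintegral_lintegral_swap]
          have : (Function.uncurry fun x y => (Metric.ball x (2 * r * t)).indicator H y) =
              {q : Euc n × Euc n | dist q.2 q.1 < 2 * r * t}.indicator (fun q => H q.2) := by
            funext q
            simp [Function.uncurry, indicator]
          rw [this]
          exact ((hHm.comp measurable_snd).indicator hD).aemeasurable
      _ ≤ ENNReal.ofReal ((t ^ n)⁻¹) *
          ∫⁻ y, min (ENNReal.ofReal e) (ENNReal.ofReal (ω * (2 * r) ^ n * t ^ n)) * H y := by
          refine mul_le_mul_right (lintegral_mono fun y => ?_) _
          calc ∫⁻ x in E, (Metric.ball x (2 * r * t)).indicator H y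
              = ∫⁻ x in E, (Metric.ball y (2 * r * t)).indicator (fun _ => H y) x := by
                congr 1; funext x
                simp [indicator, dist_comm]
            _ = H y * volume (Metric.ball y (2 * r * t) ∩ E) := by
                rw [lintegral_indicator Metric.isOpen_ball.measurableSet, setLIntegral_const,
                  Measure.restrict_apply Metric.isOpen_ball.measurableSet]
            _ ≤ H y * min (ENNReal.ofReal e) (ENNReal.ofReal (ω * (2 * r) ^ n * t ^ n)) := by
                refine mul_le_mul_right (le_min ?_ ?_) _
                · rw [← he']; exact measure_mono inter_subset_right
                · refine (measure_mono inter_subset_left).trans ?_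
                  rw [Measure.addHaar_ball_of_pos _ _ (by positivity), hω',
                    ← ENNReal.ofReal_mul (by positivity)]
                  apply ENNReal.ofReal_le_ofReal
                  rw [finrank_euclideanSpace_fin, mul_pow]
                  apply le_of_eq; ring
            _ = _ := mul_comm _ _
      _ = _ := by
          rw [lintegral_const_mul' _ _ (ne_top_of_le_ne_top ENNReal.ofReal_ne_top
            (min_le_left _ _))]
          exact (mul_assoc _ _ _).symm
  have hjm : Measurable fun q : Euc n × Euc n × ℝ => H (q.1 + q.2.2 • (q.2.1 - q.1)) := by
    apply hHm.comp; fun_prop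
  -- `Jint` is used with the splitting time `T = e ^ (1 / n) / r`, where `|B(y, 2rt)|` becomes
  -- comparable to `e`.
  have hmain : ENNReal.ofReal (b - a) * volume E * volume F ≤
      ENNReal.ofReal (2 * r) * (ENNReal.ofReal (ω * (2 * r) ^ n * (e ^ ((1 : ℝ) / n) / r) +
        e / (e ^ ((1 : ℝ) / n) / r) ^ (n - 1)) * ∫⁻ y, H y) := by
    calc ENNReal.ofReal (b - a) * volume E * volume F
        = ∫⁻ x in E, ∫⁻ z in F, ENNReal.ofReal (b - a) := by
          simp only [setLIntegral_const]; ring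
      _ ≤ ∫⁻ x in E, ∫⁻ z in F, ∫⁻ t in Ioo (0 : ℝ) 1,
            H (x + t • (z - x)) * ENNReal.ofReal (2 * r) :=
          setLIntegral_mono' hEm fun x hx => setLIntegral_mono' hFm fun z hz => hpt x hx z hz
      _ = ENNReal.ofReal (2 * r) * ∫⁻ x in E, ∫⁻ z in F, ∫⁻ t in Ioo (0 : ℝ) 1,
            H (x + t • (z - x)) := by
          simp only [lintegral_mul_const' _ _ ENNReal.ofReal_ne_top]
          rw [mul_comm]
      _ = ENNReal.ofReal (2 * r) * ∫⁻ t in Ioo (0 : ℝ) 1, ∫⁻ x in E, ∫⁻ z in F,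
            H (x + t • (z - x)) := by
          congr 1
          have h1 : ∀ x, ∫⁻ z in F, ∫⁻ t in Ioo (0 : ℝ) 1, H (x + t • (z - x)) =
              ∫⁻ t in Ioo (0 : ℝ) 1, ∫⁻ z in F, H (x + t • (z - x)) := by
            intro x
            rw [lintegral_lintegral_swap]
            exact (hjm.comp (f := fun q => (x, q)) (by fun_prop)).aemeasurable
          simp only [h1]
          rw [lintegral_lintegral_swap]
          apply Measurable.aemeasurable
          exact Measurable.lintegral_prod_right'
            (f := fun q : (Euc n × ℝ) × Euc n => H (q.1.1 + q.1.2 • (q.2 - q.1.1)))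
            (hjm.comp (f := fun q : (Euc n × ℝ) × Euc n => (q.1.1, q.2, q.1.2)) (by fun_prop))
      _ ≤ ENNReal.ofReal (2 * r) * ∫⁻ t in Ioo (0 : ℝ) 1, (ENNReal.ofReal ((t ^ n)⁻¹) *
          min (ENNReal.ofReal e) (ENNReal.ofReal (ω * (2 * r) ^ n * t ^ n))) * ∫⁻ y, H y :=
          mul_le_mul_right (setLIntegral_mono' measurableSet_Ioo hA) _
      _ = ENNReal.ofReal (2 * r) * ((∫⁻ t in Ioo (0 : ℝ) 1, (ENNReal.ofReal ((t ^ n)⁻¹) *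
          min (ENNReal.ofReal e) (ENNReal.ofReal (ω * (2 * r) ^ n * t ^ n)))) * ∫⁻ y, H y) := by
          rw [lintegral_mul_const]
          fun_prop
      _ ≤ _ := by
          refine mul_le_mul_right (mul_le_mul_left (Jint hn (by positivity) hepos.le
            (by positivity)) _) _
  -- cancel the factor `e ^ (1 / n)`
  set η := e ^ ((1 : ℝ) / n) with hη
  have hη0 : 0 < η := Real.rpow_pos_of_pos hepos _
  have hηn : η ^ n = e := by
    rw [hη, ← Real.rpow_natCast, ← Real.rpow_mul hepos.le, one_div_mul_cancel hn0.ne',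
      Real.rpow_one]
  have hconst : 2 * r * (ω * (2 * r) ^ n * (η / r) + e / (η / r) ^ (n - 1)) =
      η * (2 * (ω * 2 ^ n + 1) * r ^ n) := by
    obtain ⟨m, rfl⟩ : ∃ m, n = m + 1 := ⟨n - 1, by omega⟩
    rw [← hηn]
    simp only [Nat.add_sub_cancel, pow_succ, mul_pow, div_pow]
    field_simp
  have hEη : volume E = ENNReal.ofReal η * volume E ^ (1 - (1 : ℝ) / n) := by
    rw [he', ENNReal.ofReal_rpow_of_pos hepos, ← ENNReal.ofReal_mul hη0.le, hη,
      ← Real.rpow_add hepos]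
    simp
  rw [← mul_assoc (ENNReal.ofReal (2 * r)), ← ENNReal.ofReal_mul (by positivity), hconst,
    ENNReal.ofReal_mul hη0.le, mul_assoc (ENNReal.ofReal η)] at hmain
  have hη1 : ENNReal.ofReal η ≠ 0 := by simpa using hη0
  refine (ENNReal.mul_le_mul_iff_right hη1 ENNReal.ofReal_ne_top).1 (le_trans (le_of_eq ?_) hmain)
  nth_rw 2 [hEη]
  ring

/-! ### Mollification -/

/-- The operator norm for the Euclidean norm is at most the `ℓ¹` norm of the coordinates. -/
lemma enorm_clm_le {n : ℕ} (T : Euc n →L[ℝ] ℝ) :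
    ‖T‖ ≤ ∑ i, |T (EuclideanSpace.single i 1)| := by
  refine T.opNorm_le_bound (Finset.sum_nonneg fun i _ => abs_nonneg _) fun v => ?_
  have hv : v = ∑ i, v i • EuclideanSpace.single i (1 : ℝ) := by
    ext j
    simp [Finset.sum_apply, Pi.single_apply]
  calc ‖T v‖ = ‖∑ i, v i * T (EuclideanSpace.single i 1)‖ := by
        conv_lhs => rw [hv]
        simp
    _ ≤ ∑ i, ‖v i * T (EuclideanSpace.single i 1)‖ := norm_sum_le _ _
    _ ≤ ∑ i, |T (EuclideanSpace.single i 1)| * ‖v‖ := by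
        refine Finset.sum_le_sum fun i _ => ?_
        rw [norm_mul, mul_comm, Real.norm_eq_abs]
        gcongr
        exact PiLp.norm_apply_le v i
    _ = _ := by rw [Finset.sum_mul]

open scoped Convolution in
/-- The derivative of a mollification falls on the mollifier. -/
lemma fderiv_moll {n : ℕ} (φ : ContDiffBump (0 : Euc n)) {f : Euc n → ℝ}
    (hf : LocallyIntegrable f volume) (x v : Euc n) :
    fderiv ℝ (φ.normed volume ⋆[ContinuousLinearMap.lsmul ℝ ℝ, volume] f) x v =
      ∫ y, fderiv ℝ (φ.normed volume) (x - y) v * f y := by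
  have h0 : HasCompactSupport (φ.normed volume) := φ.hasCompactSupport_normed
  have h1 : ContDiff ℝ 1 (φ.normed volume) := φ.contDiff_normed
  generalize φ.normed volume = p at *
  have hd := h0.hasFDerivAt_convolution_left
      (ContinuousLinearMap.lsmul ℝ ℝ) h1 hf x
  have hex := HasCompactSupport.convolutionExists_left (μ := volume)
        ((ContinuousLinearMap.lsmul ℝ ℝ).precompL (Euc n)) (h0.fderiv ℝ)
        (h1.continuous_fderiv one_ne_zero) hf x
  rw [hd.fderiv, convolution_def, ContinuousLinearMap.integral_apply hex]
  have h1 : ∀ t, (((ContinuousLinearMap.lsmul ℝ ℝ).precompL (Euc n)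
        (fderiv ℝ p t)) (f (x - t))) v = (fun y => fderiv ℝ p (x - y) v * f y) (x - t) := by
    intro t
    simp [ContinuousLinearMap.precompL_apply]
  simp only [h1]
  rw [integral_sub_left_eq_self (fun y => fderiv ℝ p (x - y) v * f y)]

open scoped Convolution in
/-- On a smaller ball the gradient of the mollification of `u` is the mollification of its weak
gradient, so it is bounded by the mollification of `∑ i, |V i|`. Truncation to the closed ball of
radius `s` provides global integrability and is invisible on the ball of radius `r'`. -/
lemma moll {n : ℕ} {c : Euc n} {r s r' : ℝ} (hsr : s < r) {u : Euc n → ℝ}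
    {V : Euc n → Fin n → ℝ} (h : HasWeakGradientOn u V (Metric.ball c r))
    (φ : ContDiffBump (0 : Euc n)) (hφ : φ.rOut ≤ s - r') {x : Euc n} (hx : x ∈ Metric.ball c r') :
    ‖fderiv ℝ (φ.normed volume ⋆[ContinuousLinearMap.lsmul ℝ ℝ, volume]
        (Metric.closedBall c s).indicator u) x‖ₑ ≤
      ENNReal.ofReal ((φ.normed volume ⋆[ContinuousLinearMap.lsmul ℝ ℝ, volume]
        (Metric.closedBall c s).indicator (fun y => ∑ i, |V y i|)) x) := by
  obtain ⟨hu, hV, hw⟩ := h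
  set K := Metric.closedBall c s with hK
  have hKm : MeasurableSet K := Metric.isClosed_closedBall.measurableSet
  have hKB : K ⊆ Metric.ball c r := Metric.closedBall_subset_ball hsr
  have hKc : IsCompact K := isCompact_closedBall _ _
  have hUi : Integrable (K.indicator u) :=
    (hu.integrableOn_compact_subset hKB hKc).integrable_indicator hKm
  have hVi : ∀ i, Integrable (K.indicator fun y => V y i) := fun i =>
    ((hV i).integrableOn_compact_subset hKB hKc).integrable_indicator hKm
  set ψ : Euc n → ℝ := fun y => φ.normed volume (x - y) with hψ
  have hψs : ContDiff ℝ (⊤ : ℕ∞) ψ := φ.contDiff_normed.comp (by fun_prop)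
  have hψc : HasCompactSupport ψ :=
    φ.hasCompactSupport_normed.comp_homeomorph (Homeomorph.subLeft x)
  have hψK : tsupport ψ ⊆ K := by
    refine closure_minimal ?_ Metric.isClosed_closedBall
    intro y hy
    have h1 : x - y ∈ Function.support (φ.normed volume) := hy
    rw [φ.support_normed_eq, mem_ball_zero_iff] at h1
    rw [hK, Metric.mem_closedBall]
    have h2 := dist_triangle y x c
    rw [dist_comm y x, dist_eq_norm x y] at h2
    have h3 := Metric.mem_ball.1 hx
    linarith
  have hfd : ∀ i y, fderiv ℝ ψ y (EuclideanSpace.single i 1) =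
      -(fderiv ℝ (φ.normed volume) (x - y) (EuclideanSpace.single i 1)) := by
    intro i y
    have h1 : HasFDerivAt (fun y => x - y) (-(ContinuousLinearMap.id ℝ (Euc n))) y :=
      (hasFDerivAt_id y).const_sub x
    have h2 : HasFDerivAt (φ.normed volume) (fderiv ℝ (φ.normed volume) (x - y)) (x - y) :=
      ((φ.contDiff_normed (n := 1)).differentiable one_ne_zero _).hasFDerivAt
    have h3 : HasFDerivAt ψ _ y := h2.comp y h1
    rw [h3.fderiv]
    simp
  have hgrad : ∀ i, fderiv ℝ (φ.normed volume ⋆[ContinuousLinearMap.lsmul ℝ ℝ, volume]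
      K.indicator u) x (EuclideanSpace.single i 1) = ∫ y, (K.indicator (fun y => V y i)) y * ψ y := by
    intro i
    rw [fderiv_moll φ hUi.locallyIntegrable]
    have h2 : ∫ y, fderiv ℝ (φ.normed volume) (x - y) (EuclideanSpace.single i 1) *
        K.indicator u y = - ∫ y in Metric.ball c r, u y * fderiv ℝ ψ y (EuclideanSpace.single i 1) := by
      rw [← integral_indicator Metric.isOpen_ball.measurableSet, ← integral_neg]
      congr 1; funext y
      by_cases hy : y ∈ K
      · rw [indicator_of_mem hy, indicator_of_mem (hKB hy), hfd]; ring
      · have h3 : fderiv ℝ ψ y = 0 := by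
          by_contra h4
          exact hy (hψK (support_fderiv_subset ℝ h4))
        simp [hy, h3]
    rw [h2, hw ψ hψs hψc (hψK.trans hKB) i, neg_neg,
      ← integral_indicator Metric.isOpen_ball.measurableSet]
    congr 1; funext y
    by_cases hy : y ∈ K
    · rw [indicator_of_mem hy, indicator_of_mem (hKB hy)]
    · have h3 : ψ y = 0 := by
        by_contra h4
        exact hy (hψK (subset_tsupport _ h4))
      simp [hy, h3]
  have hψ0 : ∀ y, 0 ≤ ψ y := fun y => φ.nonneg_normed _
  have hint : ∀ i, Integrable fun y => |K.indicator (fun y => V y i) y| * ψ y := by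
    intro i
    obtain ⟨M, hM⟩ := hψc.exists_bound_of_continuous hψs.continuous
    exact (hVi i).abs.mul_bdd hψs.continuous.aestronglyMeasurable (Eventually.of_forall hM)
  rw [← ofReal_norm]
  apply ENNReal.ofReal_le_ofReal
  calc _ ≤ ∑ i, |∫ y, (K.indicator (fun y => V y i)) y * ψ y| := by
        refine (enorm_clm_le _).trans (le_of_eq ?_)
        simp only [hgrad]
    _ ≤ ∑ i, ∫ y, |K.indicator (fun y => V y i) y| * ψ y := by
        refine Finset.sum_le_sum fun i _ => ?_
        refine abs_integral_le_integral_abs.trans (le_of_eq ?_)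
        congr 1; funext y
        rw [abs_mul, abs_of_nonneg (hψ0 y)]
    _ = ∫ y, ψ y * K.indicator (fun y => ∑ i, |V y i|) y := by
        rw [← integral_finsetSum _ (fun i _ => hint i)]
        congr 1; funext y
        by_cases hy : y ∈ K
        · simp [hy, Finset.sum_mul, mul_comm (ψ y)]
        · simp [hy]
    _ = _ := by
        rw [convolution_def, ← integral_sub_left_eq_self _ volume x]
        simp [hψ]

/-! ### The level-set inequality for weakly differentiable functions -/

/-- Fatou's lemma for sets, with sets that need not be measurable. -/
lemma eventually_lt_measure {α : Type*} [MeasurableSpace α] {μ : Measure α} {E : Set α}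
    {Ej : ℕ → Set α} (h : ∀ᵐ x ∂μ, x ∈ E → ∀ᶠ j in atTop, x ∈ Ej j) {l : ℝ≥0∞} (hl : l < μ E) :
    ∀ᶠ j in atTop, l < μ (Ej j) := by
  have h1 : μ E ≤ μ (⋃ j, ⋂ i ≥ j, Ej i) := by
    refine measure_mono_ae ?_
    filter_upwards [h] with x hx hxE
    obtain ⟨j, hj⟩ := eventually_atTop.1 (hx hxE)
    exact mem_iUnion.2 ⟨j, mem_iInter₂.2 hj⟩
  have hmono : Monotone fun j => ⋂ i ≥ j, Ej i := by
    intro j k hjk x hx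
    exact mem_iInter₂.2 fun i hi => mem_iInter₂.1 hx i (hjk.trans hi)
  rw [hmono.measure_iUnion] at h1
  obtain ⟨j, hj⟩ := lt_iSup_iff.1 (hl.trans_le h1)
  filter_upwards [eventually_ge_atTop j] with k hk
  exact hj.trans_le (measure_mono fun x hx => mem_iInter₂.1 hx k hk)

/-- Lower semicontinuity of the left-hand side of the level-set inequality `smooth_est` along
sequences of sets that eventually contain almost every point of the limit sets. -/
lemma level_limit {α : Type*} [MeasurableSpace α] {μ : Measure α} {E F : Set α}
    {Ej Fj : ℕ → Set α} {θ : ℝ} (hθ : 0 < θ)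
    (hE : ∀ᵐ x ∂μ, x ∈ E → ∀ᶠ j in atTop, x ∈ Ej j)
    (hF : ∀ᵐ x ∂μ, x ∈ F → ∀ᶠ j in atTop, x ∈ Fj j)
    {k : ℝ≥0∞} {kj : ℕ → ℝ≥0∞} (hk : Tendsto kj atTop (nhds k))
    {X : ℝ≥0∞} {Xj : ℕ → ℝ≥0∞} (hX : Tendsto Xj atTop (nhds X))
    (h : ∀ j, kj j * μ (Ej j) ^ θ * μ (Fj j) ≤ Xj j) :
    k * μ E ^ θ * μ F ≤ X := by
  have key : ∀ e < μ E, ∀ f < μ F, k * e ^ θ * f ≤ X := by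
    intro e he f hf
    have he' : e ^ θ ≠ ⊤ := ENNReal.rpow_ne_top_of_nonneg hθ.le he.ne_top
    have h1 : Tendsto (fun j => kj j * e ^ θ * f) atTop (nhds (k * e ^ θ * f)) :=
      ENNReal.Tendsto.mul_const (ENNReal.Tendsto.mul_const hk (Or.inr he')) (Or.inr hf.ne_top)
    refine le_of_tendsto_of_tendsto h1 hX ?_
    filter_upwards [eventually_lt_measure hE he, eventually_lt_measure hF hf] with j h2 h3
    refine le_trans ?_ (h j)
    exact mul_le_mul' (mul_le_mul' le_rfl (ENNReal.rpow_le_rpow h2.le hθ.le)) h3.le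
  have key2 : ∀ e < μ E, k * e ^ θ * μ F ≤ X := fun e he =>
    ENNReal.mul_le_of_forall_lt fun a' ha' b' hb' =>
      (mul_le_mul' ha'.le le_rfl).trans (key e he b' hb')
  rw [mul_comm k, mul_assoc]
  refine ENNReal.mul_le_of_forall_lt fun a' ha' b' hb' => ?_
  have h4 : a' ^ θ⁻¹ < μ E := (ENNReal.rpow_inv_lt_iff hθ).2 ha'
  refine le_trans ?_ (key2 _ h4)
  rw [ENNReal.rpow_inv_rpow hθ.ne', mul_comm k, mul_assoc]
  exact mul_le_mul' le_rfl hb'.le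

/-- Scheffé's lemma, for the positive parts. -/
lemma scheffe {α : Type*} [MeasurableSpace α] {μ : Measure α} {γ : α → ℝ} {γj : ℕ → α → ℝ}
    (hγ : Integrable γ μ) (hγj : ∀ j, Integrable (γj j) μ) (h0 : ∀ j x, 0 ≤ γj j x)
    (hI : ∀ j, ∫ x, γj j x ∂μ = ∫ x, γ x ∂μ)
    (hl : ∀ᵐ x ∂μ, Tendsto (fun j => γj j x) atTop (nhds (γ x))) :
    Tendsto (fun j => ∫⁻ x, ENNReal.ofReal (γj j x - γ x) ∂μ) atTop (nhds 0) := by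
  have hfin : ∀ f : α → ℝ, Integrable f μ → ∫⁻ x, ENNReal.ofReal (f x) ∂μ ≠ ⊤ := fun f hf =>
    ((lintegral_ofReal_le_lintegral_enorm f).trans_lt hf.2).ne
  have hswap : ∀ j, ∫⁻ x, ENNReal.ofReal (γj j x - γ x) ∂μ =
      ∫⁻ x, ENNReal.ofReal (γ x - γj j x) ∂μ := by
    intro j
    have h1 := integral_eq_lintegral_pos_part_sub_lintegral_neg_part ((hγj j).sub hγ)
    rw [integral_sub' (hγj j) hγ, hI, sub_self] at h1
    simp only [Pi.sub_apply, neg_sub] at h1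
    exact (ENNReal.toReal_eq_toReal_iff' (hfin _ ((hγj j).sub hγ))
      (hfin _ (hγ.sub (hγj j)))).1 (by simp only [Pi.sub_apply]; linarith)
  simp only [hswap]
  have h2 := tendsto_lintegral_of_dominated_convergence' (μ := μ)
    (F := fun j x => ENNReal.ofReal (γ x - γj j x)) (f := fun _ => 0)
    (fun x => ENNReal.ofReal (γ x))
    (fun j => (hγ.sub (hγj j)).1.aemeasurable.ennreal_ofReal)
    (fun j => Eventually.of_forall fun x => ENNReal.ofReal_le_ofReal (by linarith [h0 j x]))
    (hfin _ hγ) (by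
      filter_upwards [hl] with x hx
      have h3 : Tendsto (fun j => γ x - γj j x) atTop (nhds 0) := by
        simpa using hx.const_sub (γ x)
      simpa using ENNReal.tendsto_ofReal h3)
  simpa using h2

open scoped Convolution in
/-- The level-set inequality `smooth_est` passes from mollifications to their limit. -/
lemma moll_limit {n : ℕ} (hn : 2 ≤ n) (c : Euc n) {r : ℝ} (hr : 0 < r) {f γ : Euc n → ℝ}
    (hf : Integrable f volume) (hγ : Integrable γ volume) (hγ0 : ∀ x, 0 ≤ γ x)
    (φ : ℕ → ContDiffBump (0 : Euc n)) (hφ : Tendsto (fun j => (φ j).rOut) atTop (nhds 0))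
    (hφ2 : ∀ j, (φ j).rOut ≤ 2 * (φ j).rIn)
    (hG : ∀ j, ∀ x ∈ Metric.ball c r,
      ‖fderiv ℝ ((φ j).normed volume ⋆[ContinuousLinearMap.lsmul ℝ ℝ, volume] f) x‖ₑ ≤
      ENNReal.ofReal (((φ j).normed volume ⋆[ContinuousLinearMap.lsmul ℝ ℝ, volume] γ) x))
    {a a' b' b : ℝ} (haa : a < a') (hab : a' < b') (hbb : b' < b) :
    ENNReal.ofReal (b' - a') *
        volume (Metric.ball c r ∩ {x | b ≤ f x}) ^ (1 - (1 : ℝ) / n) *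
        volume (Metric.ball c r ∩ {x | f x ≤ a}) ≤
      ENNReal.ofReal (2 * ((volume (Metric.ball (0 : Euc n) 1)).toReal * 2 ^ n + 1) * r ^ n) *
        ∫⁻ x in Metric.ball c r ∩ {x | a < f x ∧ f x < b}, ENNReal.ofReal (γ x) := by
  have hθ : 0 < 1 - (1 : ℝ) / n := by
    have : (2 : ℝ) ≤ n := by exact_mod_cast hn
    rw [sub_pos, div_lt_one (by linarith)]; linarith
  have hfc : ∀ᵐ x, Tendsto (fun j => ((φ j).normed volume ⋆[ContinuousLinearMap.lsmul ℝ ℝ, volume]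
      f) x) atTop (nhds (f x)) :=
    ContDiffBump.ae_convolution_tendsto_right_of_locallyIntegrable (K := 2) hφ
      (Eventually.of_forall hφ2) hf.locallyIntegrable
  have hγc : ∀ᵐ x, Tendsto (fun j => ((φ j).normed volume ⋆[ContinuousLinearMap.lsmul ℝ ℝ, volume]
      γ) x) atTop (nhds (γ x)) :=
    ContDiffBump.ae_convolution_tendsto_right_of_locallyIntegrable (K := 2) hφ
      (Eventually.of_forall hφ2) hγ.locallyIntegrable
  have hsm : ∀ j, ContDiff ℝ 1 ((φ j).normed volume ⋆[ContinuousLinearMap.lsmul ℝ ℝ, volume] f) :=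
    fun j => ((φ j).hasCompactSupport_normed (μ := volume)).contDiff_convolution_left (n := 1) _
      (φ j).contDiff_normed hf.locallyIntegrable
  have hγm : ∀ j, Measurable
      ((φ j).normed volume ⋆[ContinuousLinearMap.lsmul ℝ ℝ, volume] γ) := fun j =>
    (((φ j).hasCompactSupport_normed (μ := volume)).contDiff_convolution_left (n := 1) _
      (φ j).contDiff_normed hγ.locallyIntegrable).continuous.measurable
  have hγi : ∀ j, Integrable
      ((φ j).normed volume ⋆[ContinuousLinearMap.lsmul ℝ ℝ, volume] γ) := fun j =>
    ((φ j).integrable_normed (μ := volume)).integrable_convolution _ hγ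
  have hγI : ∀ j, ∫ x, ((φ j).normed volume ⋆[ContinuousLinearMap.lsmul ℝ ℝ, volume] γ) x =
      ∫ x, γ x := by
    intro j
    rw [integral_convolution _ ((φ j).integrable_normed (μ := volume)) hγ,
      (φ j).integral_normed]
    simp
  have hγj0 : ∀ j x, 0 ≤ ((φ j).normed volume ⋆[ContinuousLinearMap.lsmul ℝ ℝ, volume] γ) x := by
    intro j x
    exact integral_nonneg fun t => mul_nonneg ((φ j).nonneg_normed _) (hγ0 _)
  generalize hvj : (fun j => (φ j).normed volume ⋆[ContinuousLinearMap.lsmul ℝ ℝ, volume] f) = v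
    at *
  generalize hgj : (fun j => (φ j).normed volume ⋆[ContinuousLinearMap.lsmul ℝ ℝ, volume] γ) = g
    at *
  replace hvj := fun j => congrFun hvj j
  replace hgj := fun j => congrFun hgj j
  simp only [hvj, hgj] at *
  clear hvj hgj
  set B := Metric.ball c r
  have hBm : MeasurableSet B := Metric.isOpen_ball.measurableSet
  set S := B ∩ {x | a < f x ∧ f x < b} with hS
  set Sj : ℕ → Set (Euc n) := fun j => B ∩ {x | a' < v j x ∧ v j x < b'} with hSj
  have hSm : NullMeasurableSet S volume :=
    hBm.nullMeasurableSet.inter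
      ((nullMeasurableSet_lt aemeasurable_const hf.1.aemeasurable).inter
        (nullMeasurableSet_lt hf.1.aemeasurable aemeasurable_const))
  have hSjm : ∀ j, MeasurableSet (Sj j) := fun j =>
    hBm.inter ((measurableSet_lt measurable_const (hsm j).continuous.measurable).inter
      (measurableSet_lt (hsm j).continuous.measurable measurable_const))
  set C := ENNReal.ofReal (2 * ((volume (Metric.ball (0 : Euc n) 1)).toReal * 2 ^ n + 1) * r ^ n)
  -- The limit of the energies over `Sj j`, bounded by three terms of which two vanish.
  have hX : Tendsto (fun j => C * ((∫⁻ x in S, ENNReal.ofReal (γ x)) +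
      (∫⁻ x, (Sj j \ S).indicator (fun x => ENNReal.ofReal (γ x)) x) +
      ∫⁻ x, ENNReal.ofReal (g j x - γ x))) atTop
      (nhds (C * ∫⁻ x in S, ENNReal.ofReal (γ x))) := by
    have h2 := tendsto_lintegral_of_dominated_convergence' (μ := volume)
      (F := fun j => (Sj j \ S).indicator (fun x => ENNReal.ofReal (γ x))) (f := fun _ => 0)
      (fun x => ENNReal.ofReal (γ x))
      (fun j => hγ.1.aemeasurable.ennreal_ofReal.indicator₀
        ((hSjm j).nullMeasurableSet.diff hSm))
      (fun j => Eventually.of_forall fun x => indicator_le_self _ _ x)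
      ((lintegral_ofReal_le_lintegral_enorm γ).trans_lt hγ.2).ne (by
        filter_upwards [hfc] with x hx
        refine tendsto_const_nhds.congr' ?_
        by_cases hxS : x ∈ S
        · exact Eventually.of_forall fun j => by simp [hxS]
        by_cases hxB : x ∈ B
        · by_cases hxa : a < f x
          · have hxb : b ≤ f x := by
              by_contra h
              exact hxS ⟨hxB, hxa, not_le.1 h⟩
            filter_upwards [hx.eventually (lt_mem_nhds (hbb.trans_le hxb))] with j hj
            rw [indicator_of_notMem]
            rintro ⟨⟨_, _, h⟩, _⟩
            exact lt_asymm h hj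
          · filter_upwards [hx.eventually (gt_mem_nhds ((not_lt.1 hxa).trans_lt haa))] with j hj
            rw [indicator_of_notMem]
            rintro ⟨⟨_, h, _⟩, _⟩
            exact lt_asymm h hj
        · exact Eventually.of_forall fun j =>
            (indicator_of_notMem (fun h : x ∈ Sj j \ S => hxB h.1.1) _).symm)
    have h3 := scheffe hγ hγi hγj0 hγI hγc
    have h4 := ENNReal.Tendsto.const_mul (a := C)
      (((tendsto_const_nhds (x := ∫⁻ x in S, ENNReal.ofReal (γ x))).add h2).add h3)
      (Or.inr ENNReal.ofReal_ne_top)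
    simpa using h4
  refine level_limit hθ (Ej := fun j => B ∩ {x | b' ≤ v j x}) (Fj := fun j => B ∩ {x | v j x ≤ a'})
    ?_ ?_ (tendsto_const_nhds (x := ENNReal.ofReal (b' - a'))) hX ?_
  · filter_upwards [hfc] with x hx hxE
    filter_upwards [hx.eventually (lt_mem_nhds (hbb.trans_le hxE.2))] with j hj
    exact ⟨hxE.1, hj.le⟩
  · filter_upwards [hfc] with x hx hxE
    filter_upwards [hx.eventually (gt_mem_nhds (lt_of_le_of_lt hxE.2 haa))] with j hj
    exact ⟨hxE.1, hj.le⟩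
  · intro j
    refine (smooth_est hn c hr (hsm j) (hγm j).ennreal_ofReal (hG j) hab).trans ?_
    refine mul_le_mul_right ?_ _
    change ∫⁻ x in Sj j, _ ≤ _
    have hm1 := hγ.1.aemeasurable.ennreal_ofReal.indicator₀ hSm
    have hm2 : AEMeasurable (fun x => S.indicator (fun x => ENNReal.ofReal (γ x)) x +
        (Sj j \ S).indicator (fun x => ENNReal.ofReal (γ x)) x) volume :=
      hm1.add (hγ.1.aemeasurable.ennreal_ofReal.indicator₀
        ((hSjm j).nullMeasurableSet.diff hSm))
    rw [← lintegral_indicator (hSjm j), ← lintegral_indicator₀ hSm, ← lintegral_add_left' hm1,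
      ← lintegral_add_left' hm2]
    refine lintegral_mono fun x => ?_
    by_cases hx : x ∈ Sj j
    · rw [indicator_of_mem hx]
      have h5 : ENNReal.ofReal (g j x) ≤ ENNReal.ofReal (γ x) + ENNReal.ofReal (g j x - γ x) := by
        have := ENNReal.ofReal_add_le (p := γ x) (q := g j x - γ x)
        simpa using this
      refine h5.trans (add_le_add_left ?_ _)
      by_cases hxS : x ∈ S
      · simp [hxS]
      · simp [hx, hxS]
    · simp [hx]

open scoped Convolution in
/-- The level-set inequality for weakly differentiable functions. -/
lemma weak_est {n : ℕ} (hn : 2 ≤ n) (c : Euc n) {r : ℝ} (hr : 0 < r) {u : Euc n → ℝ}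
    {V : Euc n → Fin n → ℝ} (h : HasWeakGradientOn u V (Metric.ball c r)) {a b : ℝ}
    (hab : a < b) :
    ENNReal.ofReal (b - a) *
        volume (Metric.ball c r ∩ {x | b ≤ u x}) ^ (1 - (1 : ℝ) / n) *
        volume (Metric.ball c r ∩ {x | u x ≤ a}) ≤
      ENNReal.ofReal (2 * ((volume (Metric.ball (0 : Euc n) 1)).toReal * 2 ^ n + 1) * r ^ n) *
        ∫⁻ x in Metric.ball c r ∩ {x | a < u x ∧ u x < b}, ENNReal.ofReal (∑ i, |V x i|) := by
  have hθ : 0 < 1 - (1 : ℝ) / n := by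
    have : (2 : ℝ) ≤ n := by exact_mod_cast hn
    rw [sub_pos, div_lt_one (by linarith)]; linarith
  -- the inequality on a smaller concentric ball
  have key : ∀ r', 0 < r' → r' < r → ∀ a' b', a < a' → a' < b' → b' < b →
      ENNReal.ofReal (b' - a') *
        volume (Metric.ball c r' ∩ {x | b ≤ u x}) ^ (1 - (1 : ℝ) / n) *
        volume (Metric.ball c r' ∩ {x | u x ≤ a}) ≤
      ENNReal.ofReal (2 * ((volume (Metric.ball (0 : Euc n) 1)).toReal * 2 ^ n + 1) * r ^ n) *
        ∫⁻ x in Metric.ball c r ∩ {x | a < u x ∧ u x < b}, ENNReal.ofReal (∑ i, |V x i|) := by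
    intro r' hr' hrr a' b' ha hab' hb
    obtain ⟨s, hs1, hs2⟩ := exists_between hrr
    have hKm : MeasurableSet (Metric.closedBall c s) := Metric.isClosed_closedBall.measurableSet
    have hKB : Metric.closedBall c s ⊆ Metric.ball c r := Metric.closedBall_subset_ball hs2
    have hKc : IsCompact (Metric.closedBall c s) := isCompact_closedBall _ _
    have hd : ∀ j : ℕ, 0 < (s - r') / (j + 1) := fun j => by
      have : 0 < s - r' := by linarith
      positivity
    let φ : ℕ → ContDiffBump (0 : Euc n) := fun j =>
      ⟨(s - r') / (j + 1) / 2, (s - r') / (j + 1), half_pos (hd j), half_lt_self (hd j)⟩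
    have hφ : Tendsto (fun j => (φ j).rOut) atTop (nhds 0) := by
      have := tendsto_one_div_add_atTop_nhds_zero_nat.const_mul (s - r')
      simpa [φ, div_eq_mul_inv] using this
    have hL := moll_limit hn c hr' (f := (Metric.closedBall c s).indicator u)
      (γ := (Metric.closedBall c s).indicator (fun y => ∑ i, |V y i|))
      ((h.1.integrableOn_compact_subset hKB hKc).integrable_indicator hKm)
      (IntegrableOn.integrable_indicator (integrable_finsetSum _ fun i _ =>
        ((h.2.1 i).integrableOn_compact_subset hKB hKc).abs) hKm)
      (fun x => indicator_nonneg (fun y _ => Finset.sum_nonneg fun i _ => abs_nonneg _) x)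
      φ hφ (fun j => by simp [φ]; linarith)
      (fun j x hx => moll hs2 h (φ j) (by
        change (s - r') / (j + 1) ≤ s - r'
        refine div_le_self (by linarith) (by linarith [(Nat.cast_nonneg j : (0:ℝ) ≤ j)])) hx)
      ha hab' hb
    have hsub : ∀ x ∈ Metric.ball c r', x ∈ Metric.closedBall c s := fun x hx =>
      Metric.ball_subset_closedBall (Metric.ball_subset_ball hs1.le hx)
    have e1 : Metric.ball c r' ∩ {x | b ≤ (Metric.closedBall c s).indicator u x} =
        Metric.ball c r' ∩ {x | b ≤ u x} := by
      ext x
      refine and_congr_right fun hx => ?_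
      simp [indicator_of_mem (hsub x hx)]
    have e2 : Metric.ball c r' ∩ {x | (Metric.closedBall c s).indicator u x ≤ a} =
        Metric.ball c r' ∩ {x | u x ≤ a} := by
      ext x
      refine and_congr_right fun hx => ?_
      simp [indicator_of_mem (hsub x hx)]
    have e3 : Metric.ball c r' ∩ {x | a < (Metric.closedBall c s).indicator u x ∧
        (Metric.closedBall c s).indicator u x < b} ⊆
        Metric.ball c r ∩ {x | a < u x ∧ u x < b} := by
      rintro x ⟨hx, hx2⟩
      rw [Set.mem_ofPred_eq, indicator_of_mem (hsub x hx)] at hx2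
      exact ⟨Metric.ball_subset_ball hrr.le hx, hx2⟩
    rw [e1, e2] at hL
    refine hL.trans (mul_le_mul' ?_ ((lintegral_mono_set e3).trans ?_))
    · apply ENNReal.ofReal_le_ofReal
      have := pow_le_pow_left₀ hr'.le hrr.le n
      gcongr
    · refine lintegral_mono fun x => ENNReal.ofReal_le_ofReal ?_
      exact indicator_le_self' (fun x _ => Finset.sum_nonneg fun i _ => abs_nonneg _) x
  have hb3 : 0 < (b - a) / 3 := by linarith
  have hε : Tendsto (fun j : ℕ => (1 : ℝ) / (j + 1)) atTop (nhds 0) :=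
    tendsto_one_div_add_atTop_nhds_zero_nat
  have hε0 : ∀ j : ℕ, 0 < (1 : ℝ) / (j + 1) := fun j => by positivity
  have hε1 : ∀ j : ℕ, (1 : ℝ) / (j + 1) ≤ 1 := fun j => by
    rw [div_le_one (by positivity)]; linarith [(Nat.cast_nonneg j : (0:ℝ) ≤ j)]
  have hin : ∀ x ∈ Metric.ball c r, ∀ᶠ j : ℕ in atTop,
      x ∈ Metric.ball c (r * (1 - 1 / 2 * (1 / ((j : ℝ) + 1)))) := by
    intro x hx
    have h1 : Tendsto (fun j : ℕ => r * (1 - 1 / 2 * (1 / ((j : ℝ) + 1)))) atTop (nhds r) := by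
      have := ((hε.const_mul (1 / 2)).const_sub 1).const_mul r
      simpa using this
    exact h1.eventually (lt_mem_nhds (Metric.mem_ball.1 hx))
  refine level_limit hθ
    (Ej := fun j => Metric.ball c (r * (1 - 1 / 2 * (1 / ((j : ℝ) + 1)))) ∩ {x | b ≤ u x})
    (Fj := fun j => Metric.ball c (r * (1 - 1 / 2 * (1 / ((j : ℝ) + 1)))) ∩ {x | u x ≤ a})
    (kj := fun j => ENNReal.ofReal ((b - (b - a) / 3 * (1 / ((j : ℝ) + 1))) -
      (a + (b - a) / 3 * (1 / ((j : ℝ) + 1)))))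
    (Eventually.of_forall fun x hx => (hin x hx.1).mono fun j hj => ⟨hj, hx.2⟩)
    (Eventually.of_forall fun x hx => (hin x hx.1).mono fun j hj => ⟨hj, hx.2⟩)
    (ENNReal.tendsto_ofReal ?_) tendsto_const_nhds fun j => ?_
  · have := ((hε.const_mul ((b - a) / 3)).const_sub b).sub
      ((hε.const_mul ((b - a) / 3)).const_add a)
    simpa using this
  · have h1 := hε0 j
    have h2 := hε1 j
    apply key
    · apply mul_pos hr; linarith
    · nlinarith
    · nlinarith
    · nlinarith
    · nlinarith

/-! ### Medians and the abstract Poincaré inequality -/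

lemma exists_median {α : Type*} [MeasurableSpace α] (μ : Measure α) [IsFiniteMeasure μ] {L : ℝ}
    (hL : 0 < L) (hμ : μ univ = ENNReal.ofReal L) {u : α → ℝ} (hu : Measurable u) :
    ∃ m, ENNReal.ofReal (L / 2) ≤ μ {x | u x ≤ m} ∧ ENNReal.ofReal (L / 2) ≤ μ {x | m ≤ u x} := by
  set A : Set ℝ := {l | ENNReal.ofReal (L / 2) ≤ μ {x | u x ≤ l}} with hA
  have hlt : ENNReal.ofReal (L / 2) < ENNReal.ofReal L :=
    (ENNReal.ofReal_lt_ofReal_iff hL).2 (by linarith)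
  have hAne : A.Nonempty := by
    have h1 : ∀ᶠ k : ℕ in atTop, ENNReal.ofReal (L / 2) < μ {x | u x ≤ k} := by
      refine eventually_lt_measure (E := univ) (Eventually.of_forall fun x _ => ?_)
        (by rwa [hμ])
      obtain ⟨k, hk⟩ := exists_nat_ge (u x)
      filter_upwards [eventually_ge_atTop k] with j hj
      exact hk.trans (by exact_mod_cast hj)
    obtain ⟨k, hk⟩ := h1.exists
    exact ⟨k, hk.le⟩
  have hAb : BddBelow A := by
    have h1 : ∀ᶠ k : ℕ in atTop, ENNReal.ofReal (L / 2) < μ {x | -(k : ℝ) < u x} := by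
      refine eventually_lt_measure (E := univ) (Eventually.of_forall fun x _ => ?_)
        (by rwa [hμ])
      obtain ⟨k, hk⟩ := exists_nat_gt (-u x)
      filter_upwards [eventually_ge_atTop k] with j hj
      have : (k : ℝ) ≤ j := by exact_mod_cast hj
      change -(j : ℝ) < u x
      linarith
    obtain ⟨k, hk⟩ := h1.exists
    refine ⟨-(k : ℝ), fun l hl => ?_⟩
    by_contra hlk
    have h2 : μ {x | u x ≤ l} + μ {x | -(k : ℝ) < u x} ≤ ENNReal.ofReal L := by
      rw [← hμ, ← measure_union _ (measurableSet_lt measurable_const hu)]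
      · exact measure_mono (subset_univ _)
      · rw [Set.disjoint_left]
        intro x hx hx'
        have h3 : u x ≤ l := hx
        have h4 : -(k : ℝ) < u x := hx'
        linarith
    have h5 : ENNReal.ofReal L < μ {x | u x ≤ l} + μ {x | -(k : ℝ) < u x} := by
      calc ENNReal.ofReal L = ENNReal.ofReal (L / 2) + ENNReal.ofReal (L / 2) := by
            rw [← ENNReal.ofReal_add (by linarith) (by linarith)]; ring_nf
        _ < _ := ENNReal.add_lt_add_of_le_of_lt ENNReal.ofReal_ne_top hl hk
    exact absurd h5 (not_lt.2 h2)
  refine ⟨sInf A, ?_, ?_⟩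
  · have h1 : Tendsto (fun k : ℕ => μ {x | u x ≤ sInf A + 1 / ((k : ℝ) + 1)}) atTop
        (nhds (μ (⋂ k : ℕ, {x | u x ≤ sInf A + 1 / ((k : ℝ) + 1)}))) := by
      apply tendsto_measure_iInter_atTop
      · exact fun k => (measurableSet_le hu measurable_const).nullMeasurableSet
      · intro i j hij x hx
        have h2 : u x ≤ sInf A + 1 / ((j : ℝ) + 1) := hx
        have h3 : 1 / ((j : ℝ) + 1) ≤ 1 / ((i : ℝ) + 1) := by gcongr
        change u x ≤ sInf A + 1 / ((i : ℝ) + 1)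
        linarith
      · exact ⟨0, measure_ne_top _ _⟩
    have h2 : (⋂ k : ℕ, {x | u x ≤ sInf A + 1 / ((k : ℝ) + 1)}) ⊆ {x | u x ≤ sInf A} := by
      intro x hx
      have h3 : Tendsto (fun k : ℕ => sInf A + 1 / ((k : ℝ) + 1)) atTop (nhds (sInf A)) := by
        simpa using tendsto_one_div_add_atTop_nhds_zero_nat.const_add (sInf A)
      exact ge_of_tendsto' h3 fun k => mem_iInter.1 hx k
    refine le_trans (ge_of_tendsto' h1 fun k => ?_) (measure_mono h2)
    obtain ⟨l, hl, hl2⟩ := exists_lt_of_csInf_lt hAne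
      (show sInf A < sInf A + 1 / ((k : ℝ) + 1) by
        have : (0 : ℝ) < 1 / ((k : ℝ) + 1) := by positivity
        linarith)
    exact le_trans hl (measure_mono fun x hx => le_trans hx hl2.le)
  · have h1 : μ {x | u x < sInf A} ≤ ENNReal.ofReal (L / 2) := by
      by_contra h
      have h2 : ∀ᶠ k : ℕ in atTop,
          ENNReal.ofReal (L / 2) < μ {x | u x ≤ sInf A - 1 / ((k : ℝ) + 1)} := by
        refine eventually_lt_measure (Eventually.of_forall fun x hx => ?_) (not_le.1 h)
        have h3 : Tendsto (fun k : ℕ => sInf A - 1 / ((k : ℝ) + 1)) atTop (nhds (sInf A)) := by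
          simpa using tendsto_one_div_add_atTop_nhds_zero_nat.const_sub (sInf A)
        exact (h3.eventually (lt_mem_nhds hx)).mono fun k hk => hk.le
      obtain ⟨k, hk⟩ := h2.exists
      have h3 : sInf A ≤ sInf A - 1 / ((k : ℝ) + 1) := csInf_le hAb hk.le
      have : (0 : ℝ) < 1 / ((k : ℝ) + 1) := by positivity
      linarith
    have h2 : ENNReal.ofReal (L / 2) + ENNReal.ofReal (L / 2) ≤
        μ {x | u x < sInf A} + μ {x | sInf A ≤ u x} := by
      rw [← ENNReal.ofReal_add (by linarith) (by linarith), add_halves, ← hμ]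
      refine le_trans (measure_mono fun x _ => ?_) (measure_union_le _ _)
      exact lt_or_ge (u x) (sInf A)
    have h3 := h2.trans (add_le_add_left h1 _)
    exact (ENNReal.add_le_add_iff_left ENNReal.ofReal_ne_top).1 h3

/-- The two one-sided level-set inequalities around a median `m` combine into one for
`|u - m|`, since at every level the complementary set has at least half of the mass. -/
lemma level_abs {α : Type*} [MeasurableSpace α] (μ : Measure α) {L : ℝ}
    (hL : 0 < L) {u : α → ℝ} (hu : Measurable u) {θ : ℝ} (hθ0 : 0 < θ) (hθ1 : θ ≤ 1)
    {g : α → ℝ≥0∞} {D : ℝ≥0∞} {m : ℝ}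
    (hm1 : ENNReal.ofReal (L / 2) ≤ μ {x | u x ≤ m})
    (hm2 : ENNReal.ofReal (L / 2) ≤ μ {x | m ≤ u x})
    (H1 : ∀ a b : ℝ, a < b → ENNReal.ofReal (b - a) * μ {x | b ≤ u x} ^ θ * μ {x | u x ≤ a} ≤
      D * ∫⁻ x in {x | a < u x ∧ u x < b}, g x ∂μ)
    (H2 : ∀ a b : ℝ, a < b → ENNReal.ofReal (b - a) * μ {x | u x ≤ a} ^ θ * μ {x | b ≤ u x} ≤
      D * ∫⁻ x in {x | a < u x ∧ u x < b}, g x ∂μ) (a b : ℝ) (ha : 0 ≤ a) (hab : a < b) :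
    ENNReal.ofReal (b - a) * μ {x | b ≤ |u x - m|} ^ θ ≤
      D / ENNReal.ofReal (L / 2) * ∫⁻ x in {x | a < |u x - m| ∧ |u x - m| < b}, g x ∂μ := by
  have hL2 : ENNReal.ofReal (L / 2) ≠ 0 := by simpa using hL
  set S1 : Set α := {x | m + a < u x ∧ u x < m + b} with hS1
  set S2 : Set α := {x | m - b < u x ∧ u x < m - a} with hS2
  have hS2m : MeasurableSet S2 :=
    (measurableSet_lt measurable_const hu).inter (measurableSet_lt hu measurable_const)
  have hd : Disjoint S1 S2 := by
    rw [Set.disjoint_left]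
    intro x hx hx'
    have := hx.1
    have := hx'.2
    linarith
  have hsub : S1 ∪ S2 ⊆ {x | a < |u x - m| ∧ |u x - m| < b} := by
    rintro x (hx | hx)
    · have h1 := hx.1
      have h2 := hx.2
      change a < |u x - m| ∧ |u x - m| < b
      rw [abs_of_nonneg (by linarith)]
      constructor <;> linarith
    · have h1 := hx.1
      have h2 := hx.2
      change a < |u x - m| ∧ |u x - m| < b
      rw [abs_of_nonpos (by linarith)]
      constructor <;> linarith
  have e1 : ENNReal.ofReal (b - a) * μ {x | m + b ≤ u x} ^ θ ≤
      D / ENNReal.ofReal (L / 2) * ∫⁻ x in S1, g x ∂μ := by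
    rw [← ENNReal.mul_div_right_comm,
      ENNReal.le_div_iff_mul_le (Or.inl hL2) (Or.inl ENNReal.ofReal_ne_top)]
    have h := H1 (m + a) (m + b) (by linarith)
    rw [add_sub_add_left_eq_sub] at h
    refine le_trans (mul_le_mul_right (hm1.trans (measure_mono fun x hx => ?_)) _) h
    exact le_trans (show u x ≤ m from hx) (show m ≤ m + a by linarith)
  have e2 : ENNReal.ofReal (b - a) * μ {x | u x ≤ m - b} ^ θ ≤
      D / ENNReal.ofReal (L / 2) * ∫⁻ x in S2, g x ∂μ := by
    rw [← ENNReal.mul_div_right_comm,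
      ENNReal.le_div_iff_mul_le (Or.inl hL2) (Or.inl ENNReal.ofReal_ne_top)]
    have h := H2 (m - b) (m - a) (by linarith)
    rw [_root_.sub_sub_sub_cancel_left] at h
    refine le_trans (mul_le_mul_right (hm2.trans (measure_mono fun x hx => ?_)) _) h
    exact le_trans (show m - a ≤ m by linarith) hx
  calc ENNReal.ofReal (b - a) * μ {x | b ≤ |u x - m|} ^ θ
      ≤ ENNReal.ofReal (b - a) * (μ {x | m + b ≤ u x} ^ θ + μ {x | u x ≤ m - b} ^ θ) := by
        refine mul_le_mul_right (le_trans (ENNReal.rpow_le_rpow ?_ hθ0.le)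
          (ENNReal.rpow_add_le_add_rpow _ _ hθ0.le hθ1)) _
        refine le_trans (measure_mono fun x hx => ?_) (measure_union_le _ _)
        have hx' : b ≤ |u x - m| := hx
        rcases le_abs.1 hx' with h | h
        · left
          change m + b ≤ u x
          linarith
        · right
          change u x ≤ m - b
          linarith
    _ ≤ D / ENNReal.ofReal (L / 2) * ∫⁻ x in S1, g x ∂μ +
        D / ENNReal.ofReal (L / 2) * ∫⁻ x in S2, g x ∂μ := by
        rw [mul_add]
        exact add_le_add e1 e2
    _ ≤ _ := by
        rw [← mul_add, ← lintegral_union hS2m hd]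
        exact mul_le_mul_right (lintegral_mono_set hsub) _

/-- Adding a constant to a function shifts its rearrangement by at most that constant. -/
lemma rearrE_le_add {α : Type*} [MeasurableSpace α] (μ : Measure α) {f w : α → ℝ≥0∞} {d : ℝ≥0∞}
    (h : ∀ x, f x ≤ w x + d) (t : ℝ) : rearrE μ f t ≤ rearrE μ w t + d := by
  by_contra hlt
  have h1 := (lt_rearrE_iff μ f t _).1 (not_le.1 hlt)
  refine lt_irrefl (rearrE μ w t) ((lt_rearrE_iff μ w t _).2 (h1.trans_le (measure_mono ?_)))
  intro x hx
  exact lt_of_add_lt_add_right (lt_of_lt_of_le hx (h x))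

/-- The Poincaré inequality on an abstract finite measure space on which the level-set
inequalities with exponent `θ` hold. -/
lemma poincare_of_level {α : Type*} [MeasurableSpace α]
    (NX NY : RINorm (volume.restrict (Ioi (0 : ℝ)))) {C : ℝ≥0∞} {θ : ℝ} (hθ0 : 0 < θ)
    (hθ1 : θ ≤ 1)
    (hT : ∀ f : ℝ → ℝ≥0∞, NY.ρ (fun t => ∫⁻ s in Ioi t ∩ Ioi 0, f s * ENNReal.ofReal (s ^ (-θ))) ≤
      C * NX.ρ f)
    (μ : Measure α) [IsFiniteMeasure μ] {L : ℝ}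
    (hL : 0 < L) (hμ : μ univ = ENNReal.ofReal L) {u : α → ℝ} (hu : Measurable u)
    {g : α → ℝ≥0∞} (hg : Measurable g) (hgi : ∫⁻ x, g x ∂μ ≠ ⊤) {D : ℝ≥0∞} (hD : D ≠ ⊤)
    (H1 : ∀ a b : ℝ, a < b → ENNReal.ofReal (b - a) * μ {x | b ≤ u x} ^ θ * μ {x | u x ≤ a} ≤
      D * ∫⁻ x in {x | a < u x ∧ u x < b}, g x ∂μ)
    (H2 : ∀ a b : ℝ, a < b → ENNReal.ofReal (b - a) * μ {x | u x ≤ a} ^ θ * μ {x | b ≤ u x} ≤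
      D * ∫⁻ x in {x | a < u x ∧ u x < b}, g x ∂μ) :
    riNorm NY μ (fun x => u x - L⁻¹ * ∫ y, u y ∂μ) ≤
      8 * (D / ENNReal.ofReal (L / 2)) * C * NX.ρ (rearrE μ g) := by
  have hL2 : ENNReal.ofReal (L / 2) ≠ 0 := by simpa using hL
  obtain ⟨m, hm1, hm2⟩ := exists_median μ hL hμ hu
  have hK := level_abs μ hL hu hθ0 hθ1 hm1 hm2 H1 H2
  have hKt : D / ENNReal.ofReal (L / 2) ≠ ⊤ := ENNReal.div_ne_top hD hL2
  set K := D / ENNReal.ofReal (L / 2)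
  have hw : Measurable fun x => |u x - m| := by fun_prop
  have hB := stepB μ hL hμ hθ1 hw (fun x => abs_nonneg _) K hK
  obtain ⟨F, hF1, hF2⟩ := stepA NX μ hL hμ hθ0 hθ1 hw (fun x => abs_nonneg _) hg K hK
  obtain ⟨G, hG1, hG2⟩ := stepC NX μ hL hμ hθ0 hθ1 hg
  have hfin : ENNReal.ofReal (L ^ (1 - θ)) * (K * ∫⁻ x, g x ∂μ) ≠ ⊤ :=
    ENNReal.mul_ne_top ENNReal.ofReal_ne_top (ENNReal.mul_ne_top hKt hgi)
  have hwi : Integrable (fun x => u x - m) μ := by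
    refine ⟨(hu.sub_const m).aestronglyMeasurable, ?_⟩
    refine lt_of_le_of_lt ?_ (lt_top_iff_ne_top.2 hfin)
    refine le_trans (le_of_eq ?_) hB
    refine lintegral_congr fun x => ?_
    rw [← ofReal_norm, Real.norm_eq_abs]
  have hui : Integrable u μ := by
    exact (hwi.add (integrable_const m)).congr (Eventually.of_forall fun x => by simp)
  have hμr : μ.real univ = L := by
    rw [measureReal_def, hμ, ENNReal.toReal_ofReal hL.le]
  -- the mean is close to the median
  have hmean : ENNReal.ofReal |m - L⁻¹ * ∫ y, u y ∂μ| ≤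
      K * (ENNReal.ofReal (L ^ (-θ)) * ∫⁻ x, g x ∂μ) := by
    have h1 : m - L⁻¹ * ∫ y, u y ∂μ = -(L⁻¹ * ∫ y, (u y - m) ∂μ) := by
      rw [integral_sub hui (integrable_const m), integral_const, hμr, smul_eq_mul]
      field_simp
      ring
    have h2 : ENNReal.ofReal |∫ y, (u y - m) ∂μ| ≤ ∫⁻ x, ENNReal.ofReal |u x - m| ∂μ := by
      have := enorm_integral_le_lintegral_enorm (μ := μ) fun y => u y - m
      simpa only [← ofReal_norm, Real.norm_eq_abs] using this
    rw [h1, abs_neg, abs_mul, abs_of_pos (inv_pos.2 hL), ENNReal.ofReal_mul (inv_pos.2 hL).le]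
    refine (mul_le_mul_right (h2.trans hB) _).trans (le_of_eq ?_)
    rw [← mul_assoc, ← ENNReal.ofReal_mul (inv_pos.2 hL).le]
    have h3 : L⁻¹ * L ^ (1 - θ) = L ^ (-θ) := by
      rw [← Real.rpow_neg_one, ← Real.rpow_add hL]
      ring_nf
    rw [h3]
    ring
  set M := L⁻¹ * ∫ y, u y ∂μ
  -- pointwise bound of the rearrangement by the kernel operator
  have hpt : ∀ t, 0 < t → rearr μ (fun x => u x - M) t ≤
      (K * 4) * (∫⁻ s in Ioi t ∩ Ioi 0, F s * ENNReal.ofReal (s ^ (-θ))) +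
      (K * 4) * (∫⁻ s in Ioi t ∩ Ioi 0, G s * ENNReal.ofReal (s ^ (-θ))) := by
    intro t ht
    by_cases htL : t < L
    · have h1 : rearr μ (fun x => u x - M) t ≤
          rearr μ (fun x => |u x - m|) t + ENNReal.ofReal |m - M| := by
        refine rearrE_le_add μ (fun x => ?_) t
        rw [abs_abs, ← ENNReal.ofReal_add (abs_nonneg _) (abs_nonneg _)]
        exact ENNReal.ofReal_le_ofReal (abs_sub_le _ _ _)
      refine h1.trans (add_le_add ?_ ?_)
      · rw [mul_assoc]
        exact hF2 t ht
      · rw [mul_assoc]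
        exact hmean.trans (mul_le_mul_right (hG2 t ht htL) _)
    · have h0 : rearr μ (fun x => u x - M) t = 0 := by
        refine rearrE_eq_zero μ _ t ?_
        refine (measure_mono (subset_univ _)).trans ?_
        rw [hμ]
        exact ENNReal.ofReal_le_ofReal (not_lt.1 htL)
      rw [h0]
      exact zero_le
  calc riNorm NY μ (fun x => u x - M)
      ≤ NY.ρ (fun t => (K * 4) * (∫⁻ s in Ioi t ∩ Ioi 0, F s * ENNReal.ofReal (s ^ (-θ))) +
          (K * 4) * (∫⁻ s in Ioi t ∩ Ioi 0, G s * ENNReal.ofReal (s ^ (-θ)))) :=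
        NY.ρ_mono _ _ ((ae_restrict_iff' measurableSet_Ioi).2 (Eventually.of_forall hpt))
    _ ≤ (K * 4) * NY.ρ (fun t => ∫⁻ s in Ioi t ∩ Ioi 0, F s * ENNReal.ofReal (s ^ (-θ))) +
        (K * 4) * NY.ρ (fun t => ∫⁻ s in Ioi t ∩ Ioi 0, G s * ENNReal.ofReal (s ^ (-θ))) := by
        refine (NY.ρ_add _ _).trans ?_
        rw [NY.ρ_smul, NY.ρ_smul]
    _ ≤ (K * 4) * (C * NX.ρ (rearrE μ g)) + (K * 4) * (C * NX.ρ (rearrE μ g)) :=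
        add_le_add
          (mul_le_mul_right ((hT F).trans (mul_le_mul_right hF1 _)) _)
          (mul_le_mul_right ((hT G).trans (mul_le_mul_right hG1 _)) _)
    _ = _ := by ring

lemma HasWeakGradientOn.neg {n : ℕ} {u : Euc n → ℝ} {V : Euc n → Fin n → ℝ} {Ω : Set (Euc n)}
    (h : HasWeakGradientOn u V Ω) : HasWeakGradientOn (fun x => -u x) (fun x i => -V x i) Ω := by
  refine ⟨h.1.neg, fun i => (h.2.1 i).neg, fun φ h1 h2 h3 i => ?_⟩
  simp only [neg_mul, integral_neg]
  rw [h.2.2 φ h1 h2 h3 i]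

/-- A function with finite r.i. norm on a space of finite measure is integrable. -/
lemma lintegral_ne_top_of_rho {α : Type*} [MeasurableSpace α]
    (N : RINorm (volume.restrict (Ioi (0 : ℝ)))) (μ : Measure α) [IsFiniteMeasure μ] {L : ℝ}
    (hμ : μ univ = ENNReal.ofReal L) {g : α → ℝ≥0∞} (hg : Measurable g)
    (h : N.ρ (rearrE μ g) < ⊤) : ∫⁻ x, g x ∂μ ≠ ⊤ := by
  obtain ⟨C, hC, hC2⟩ := N.ρ_loc (Iio L) measurableSet_Iio (by
    rw [Measure.restrict_apply measurableSet_Iio, Iio_inter_Ioi, Real.volume_Ioo]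
    exact ENNReal.ofReal_lt_top)
  rw [← lintegral_rearrE μ hg, ← lintegral_add_compl _ (measurableSet_Iio (a := L))]
  have h0 : ∫⁻ t in (Iio L)ᶜ, rearrE μ g t ∂(volume.restrict (Ioi 0)) = 0 := by
    rw [setLIntegral_congr_fun (g := fun _ => 0) measurableSet_Iio.compl, lintegral_zero]
    intro t ht
    refine rearrE_eq_zero μ g t ((measure_mono (subset_univ _)).trans ?_)
    rw [hμ]
    exact ENNReal.ofReal_le_ofReal (not_lt.1 ht)
  rw [h0, add_zero]
  exact ne_top_of_le_ne_top (ENNReal.mul_ne_top hC h.ne) (hC2 _)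

/-! ### The Poincaré inequality on balls -/

/-- If X, Y are r.i. spaces over ℝⁿ (given by their representation norms over
(0,∞)) and the kernel operator f ↦ ∫_t^∞ f(s)s^{1/n−1}ds is bounded from X(0,∞) to Y(0,∞)
with norm ≤ C₁, then there is C₂ = C₂(C₁,n) such that ‖u − ū_B‖_{Y(B)} ≤ C₂‖∇u‖_{X(B)}
for every ball B ⊆ ℝⁿ and every u ∈ V¹X(B). -/
theorem stmt_3 (n : ℕ) (hn : 2 ≤ n) (C₁ : ℝ) (hC₁ : 0 < C₁) :
    ∃ C₂ : ℝ, 0 < C₂ ∧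
      ∀ (NX NY : RINorm (volume.restrict (Ioi (0 : ℝ)))),
        (∀ f : ℝ → ℝ≥0∞,
          NY.ρ (fun t => ∫⁻ s in Ioi t ∩ Ioi 0, f s * ENNReal.ofReal (s ^ ((1 : ℝ) / n - 1))) ≤
            ENNReal.ofReal C₁ * NX.ρ f) →
        ∀ (c : Euc n) (r : ℝ), 0 < r →
          ∀ (u : Euc n → ℝ) (V : Euc n → Fin n → ℝ),
            HasWeakGradientOn u V (Metric.ball c r) →
            riNorm NX (volume.restrict (Metric.ball c r)) (fun x => ∑ i, |V x i|) < ⊤ →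
            riNorm NY (volume.restrict (Metric.ball c r))
                (fun x => u x -
                  (volume (Metric.ball c r)).toReal⁻¹ * ∫ y in Metric.ball c r, u y) ≤
              ENNReal.ofReal C₂ *
                riNorm NX (volume.restrict (Metric.ball c r)) (fun x => ∑ i, |V x i|) := by
  set ω := (volume (Metric.ball (0 : Euc n) 1)).toReal with hω
  have hω0 : 0 < ω := ENNReal.toReal_pos (Metric.measure_ball_pos _ _ one_pos).ne'
    measure_ball_lt_top.ne
  have hn' : (2 : ℝ) ≤ n := by exact_mod_cast hn
  have hθ0 : 0 < 1 - (1 : ℝ) / n := by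
    rw [sub_pos, div_lt_one (by linarith)]; linarith
  have hθ1 : 1 - (1 : ℝ) / n ≤ 1 := by
    have : 0 ≤ (1 : ℝ) / n := by positivity
    linarith
  refine ⟨8 * (4 * (ω * 2 ^ n + 1) / ω) * C₁, by positivity, ?_⟩
  intro NX NY hT c r hr u V h hfin
  set B := Metric.ball c r with hB
  have hBm : MeasurableSet B := Metric.isOpen_ball.measurableSet
  set μ : Measure (Euc n) := volume.restrict B with hμdef
  set θ := 1 - (1 : ℝ) / n with hθ
  have hL : 0 < ω * r ^ n := by positivity
  have hvol : volume B = ENNReal.ofReal (ω * r ^ n) := by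
    have h1 := Measure.addHaar_ball_of_pos (volume : Measure (Euc n)) c hr
    rw [finrank_euclideanSpace_fin] at h1
    rw [hB, h1, mul_comm ω, ENNReal.ofReal_mul (by positivity), hω,
      ENNReal.ofReal_toReal measure_ball_lt_top.ne]
  have hμ : μ univ = ENNReal.ofReal (ω * r ^ n) := by
    rw [hμdef, Measure.restrict_apply_univ, hvol]
  have : IsFiniteMeasure μ := ⟨by rw [hμ]; exact ENNReal.ofReal_lt_top⟩
  have hum : AEMeasurable u μ := h.1.aestronglyMeasurable.aemeasurable
  have hgm : AEMeasurable (fun x => ENNReal.ofReal (∑ i, |V x i|)) μ :=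
    AEMeasurable.ennreal_ofReal (Finset.aemeasurable_fun_sum _ fun i _ =>
      (h.2.1 i).aestronglyMeasurable.aemeasurable.abs)
  obtain ⟨u', hu', huu'⟩ := hum
  obtain ⟨g, hg, hgg⟩ := hgm
  have hVabs : (fun x => ENNReal.ofReal |(∑ i, |V x i|)|) = fun x => ENNReal.ofReal (∑ i, |V x i|) := by
    funext x
    rw [abs_of_nonneg (Finset.sum_nonneg fun i _ => abs_nonneg _)]
  have hρ : riNorm NX μ (fun x => ∑ i, |V x i|) = NX.ρ (rearrE μ g) := by
    rw [riNorm, ← rearrE_congr_ae hgg, ← hVabs]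
    rfl
  have hset : ∀ p : ℝ → Prop, μ {x | p (u' x)} = volume (B ∩ {x | p (u x)}) := by
    intro p
    rw [inter_comm, ← Measure.restrict_apply' hBm]
    refine measure_congr ?_
    filter_upwards [huu'] with x hx
    change p (u' x) = p (u x)
    rw [hx]
  have hint : ∀ p : ℝ → Prop, ∫⁻ x in {x | p (u' x)}, g x ∂μ =
      ∫⁻ x in B ∩ {x | p (u x)}, ENNReal.ofReal (∑ i, |V x i|) := by
    intro p
    have e : {x | p (u' x)} =ᵐ[μ] {x | p (u x)} := by
      filter_upwards [huu'] with x hx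
      change p (u' x) = p (u x)
      rw [hx]
    rw [setLIntegral_congr e, lintegral_congr_ae (ae_restrict_of_ae hgg.symm), hμdef,
      Measure.restrict_restrict' hBm, inter_comm]
  have hmain := poincare_of_level NX NY (C := ENNReal.ofReal C₁) hθ0 hθ1
    (fun f => by
      have e : -θ = (1 : ℝ) / n - 1 := by rw [hθ]; ring
      rw [e]
      exact hT f)
    μ hL hμ hu' hg (lintegral_ne_top_of_rho NX μ hμ hg (hρ ▸ hfin))
    (D := ENNReal.ofReal (2 * (ω * 2 ^ n + 1) * r ^ n)) ENNReal.ofReal_ne_top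
    (fun a b hab => by
      rw [hset (fun y => b ≤ y), hset (fun y => y ≤ a), hint (fun y => a < y ∧ y < b)]
      exact weak_est hn c hr h hab)
    (fun a b hab => by
      rw [hset (fun y => b ≤ y), hset (fun y => y ≤ a), hint (fun y => a < y ∧ y < b)]
      have h1 := weak_est hn c hr h.neg (neg_lt_neg hab)
      simpa only [neg_le_neg_iff, neg_lt_neg_iff, neg_sub_neg, abs_neg,
        and_comm (a := _ < b)] using h1)
  rw [hρ]
  have hlhs : riNorm NY μ (fun x => u x - (volume B).toReal⁻¹ * ∫ y, u y ∂μ) =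
      riNorm NY μ (fun x => u' x - (ω * r ^ n)⁻¹ * ∫ y, u' y ∂μ) := by
    rw [hvol, ENNReal.toReal_ofReal hL.le, integral_congr_ae huu']
    refine congrArg NY.ρ (rearrE_congr_ae ?_)
    filter_upwards [huu'] with x hx
    rw [hx]
  refine (le_of_eq hlhs).trans (hmain.trans (le_of_eq ?_))
  congr 1
  rw [← ENNReal.ofReal_div_of_pos (by positivity), ENNReal.ofReal_mul (by positivity),
    ENNReal.ofReal_mul (by norm_num)]
  congr 2
  · norm_num
  · congr 1
    field_simp
    ring
end
end

section
/- Let X be a rearrangement-invariant space over ℝⁿ (n ≥ 2) such that the function t ↦ t^{1/n − 1} χ_{(1,∞)}(t) belongs to the associate space X'(0,∞). Let u ∈ V¹X(ℝⁿ), and let {B_k} be an increasing sequence of balls in ℝⁿ (B_k ⊆ B_{k+1}). Then the sequence of integral means λ_k = (1/|B_k|)∫_{B_k} u(x) dx is bounded; in particular it has a convergent subsequence. -/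
/-!
The first ball and the `k`-th ball are nested, hence are members of one family of homothetic balls
`B(a + r b, r)` with `‖b‖ ≤ 1`, indexed by the radius. Along such a family the function
`r ↦ r⁻ⁿ ∫_{B(a + r b, r)} u` has derivative at most `2 r⁻ⁿ ∫_{B(a + r b, r)} ∑ |Vᵢ|` in absolute
value. To obtain this for a weak gradient, the indicator of the ball is replaced by a smooth profile
`ζ`: the kernel `K_r(y) = r⁻ⁿ ζ((y - a)/r)` satisfies `∂K_r/∂r = -div ((y - a)/r * K_r)`
(`sum_fderiv_dilField`), so the definition of the weak gradient applies directly
(`hasDerivAt_smoothMean`, `integral_dilKerDeriv`), and the profile is then let tend to the indicator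
(`tendsto_smoothMean`).

With `g = ∑ |Vᵢ|` and `ω` the volume of the unit ball, the Hardy–Littlewood inequality
(`setLIntegral_le_rearr`) bounds the integral of `g` over a ball of radius `r` by
`∫_0^{ω rⁿ} g*(s) ds`. Integration over `r > r₀` and Fubini's theorem give
`∫_0^∞ g*(s) J(s) ds`, where `J` is bounded on `(0, 1]` and at most a multiple of `s^{1/n-1}` on
`(1, ∞)`. This is finite (`lintegral_growth_lt_top`): the first part by local integrability in an
r.i. space, the second by the hypothesis on the associate norm and Hölder's inequality. The bound
depends only on the radius of the first ball, so the means are uniformly bounded.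
-/

open MeasureTheory ENNReal Set Filter

noncomputable section

/-- `u` is weakly differentiable on ℝⁿ with weak gradient `V`. -/
def HasWeakGradient {n : ℕ} (u : Euc n → ℝ) (V : Euc n → Fin n → ℝ) : Prop :=
  LocallyIntegrable u volume ∧ (∀ i, LocallyIntegrable (fun x => V x i) volume) ∧
    ∀ φ : Euc n → ℝ, ContDiff ℝ (⊤ : ℕ∞) φ → HasCompactSupport φ → ∀ i,
      ∫ x, u x * fderiv ℝ φ x (EuclideanSpace.single i 1) = - ∫ x, V x i * φ x

/-- Hölder's inequality in qualitative form. Scaling by `(ρ f + 1)⁻¹` instead of `(ρ f)⁻¹`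
avoids a separate treatment of `ρ f = 0`. -/
lemma lintegral_mul_lt_top {α : Type*} [MeasurableSpace α] {μ : Measure α} (N : RINorm μ)
    {f g : α → ℝ≥0∞} (hf : N.ρ f < ⊤) (hg : N.assoc g < ⊤) : ∫⁻ x, f x * g x ∂μ < ⊤ := by
  set c : ℝ≥0∞ := (N.ρ f + 1)⁻¹ with hc
  have hne : N.ρ f + 1 ≠ ⊤ := ENNReal.add_ne_top.2 ⟨hf.ne, ENNReal.one_ne_top⟩
  have h0 : N.ρ f + 1 ≠ 0 := by simp
  have hc0 : c ≠ 0 := ENNReal.inv_ne_zero.2 hne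
  have hct : c ≠ ⊤ := ENNReal.inv_ne_top.2 h0
  have h1 : N.ρ (fun x => c * f x) ≤ 1 := by
    rw [N.ρ_smul]
    calc c * N.ρ f ≤ c * (N.ρ f + 1) := by gcongr; exact le_self_add
      _ = 1 := ENNReal.inv_mul_cancel h0 hne
  have h2 : ∫⁻ x, c * f x * g x ∂μ ≤ N.assoc g :=
    le_iSup₂ (f := fun (f : α → ℝ≥0∞) (_ : N.ρ f ≤ 1) => ∫⁻ x, f x * g x ∂μ)
      (fun x => c * f x) h1
  simp_rw [mul_assoc] at h2
  rw [lintegral_const_mul' _ _ hct] at h2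
  by_contra hcon
  rw [not_lt_top_iff.1 hcon, ENNReal.mul_top hc0] at h2
  exact absurd hg (not_lt.2 h2)

lemma setLIntegral_lt_top {N : RINorm (volume.restrict (Ioi (0 : ℝ)))}
    {f : ℝ → ℝ≥0∞} (hf : N.ρ f < ⊤) (t : ℝ) : ∫⁻ s in Ioc 0 t, f s < ⊤ := by
  have hfin : (volume.restrict (Ioi (0 : ℝ))) (Ioc 0 t) < ⊤ :=
    lt_of_le_of_lt (Measure.restrict_apply_le _ _) (by simp)
  obtain ⟨C, hC, h⟩ := N.ρ_loc (Ioc 0 t) measurableSet_Ioc hfin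
  have h1 := h f
  rw [Measure.restrict_restrict measurableSet_Ioc,
    inter_eq_left.2 (Ioc_subset_Ioi_self : Ioc 0 t ⊆ Ioi (0 : ℝ))] at h1
  exact h1.trans_lt (ENNReal.mul_lt_top hC.lt_top hf)

/-- The rearrangement of a function of finite norm is finite, not only almost everywhere: it is
antitone and integrable near the origin. -/
lemma rearrE_lt_top {α : Type*} [MeasurableSpace α] {μ : Measure α} {f : α → ℝ≥0∞}
    {N : RINorm (volume.restrict (Ioi (0 : ℝ)))} (hf : N.ρ (rearrE μ f) < ⊤) {s : ℝ} (hs : 0 < s) :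
    rearrE μ f s < ⊤ := by
  have h := setLIntegral_lt_top hf s
  have h1 : ∫⁻ _ in Ioc 0 s, rearrE μ f s ≤ ∫⁻ x in Ioc 0 s, rearrE μ f x :=
    setLIntegral_mono' measurableSet_Ioc fun x hx => rearrE_antitone μ f hx.2
  by_contra hcon
  rw [not_lt_top_iff.1 hcon] at h1
  simp only [lintegral_const, MeasurableSet.univ, Measure.restrict_apply, univ_inter,
    Real.volume_Ioc, sub_zero] at h1
  rw [ENNReal.top_mul (by simpa using hs)] at h1
  exact absurd h (not_lt.2 h1)

/-- Hardy–Littlewood for an indicator: `∫_B g ≤ ∫_0^{|B|} g*`. By the layer cake formula it is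
enough to compare super-level sets, and `s < μ {l < g}` forces `l ≤ g* s`. -/
lemma setLIntegral_le_rearr {α : Type*} [MeasurableSpace α] {μ : Measure α} {g : α → ℝ}
    (hg0 : ∀ x, 0 ≤ g x) (hg : AEMeasurable g μ)
    (hfin : ∀ s, 0 < s → rearr μ g s < ⊤) {B : Set α} {t : ℝ}
    (hB : μ B = ENNReal.ofReal t) :
    ∫⁻ x in B, ENNReal.ofReal (g x) ∂μ ≤ ∫⁻ s in Ioo 0 t, rearr μ g s := by
  have hanti : Antitone (rearr μ g) := rearrE_antitone _ _
  have hR : ∫⁻ s in Ioo 0 t, rearr μ g s =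
      ∫⁻ s in Ioo 0 t, ENNReal.ofReal (rearr μ g s).toReal := by
    refine setLIntegral_congr_fun measurableSet_Ioo fun s hs => ?_
    exact (ENNReal.ofReal_toReal (hfin s hs.1).ne).symm
  rw [hR, lintegral_eq_lintegral_meas_lt _ (Eventually.of_forall hg0) hg.restrict,
    lintegral_eq_lintegral_meas_le _ (Eventually.of_forall fun _ => ENNReal.toReal_nonneg)
      (hanti.measurable.ennreal_toReal).aemeasurable]
  refine setLIntegral_mono' measurableSet_Ioi fun l hl => ?_
  have hl : 0 < l := hl
  set a := μ {x | l < g x} with ha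
  have h1 : (μ.restrict B) {x | l < g x} ≤ min (ENNReal.ofReal t) a := by
    refine le_min ?_ (Measure.restrict_apply_le _ _)
    calc _ ≤ (μ.restrict B) univ := measure_mono (subset_univ _)
      _ = _ := by rw [Measure.restrict_apply_univ, hB]
  have key : ∀ s : ℝ, 0 < s → ENNReal.ofReal s < a → l ≤ (rearr μ g s).toReal := by
    intro s hs hsa
    rw [← ENNReal.ofReal_le_iff_le_toReal (hfin s hs).ne]
    refine le_sInf fun l' hl' => ?_
    by_contra hcon
    push Not at hcon
    have : a ≤ μ {x | l' < ENNReal.ofReal |g x|} := by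
      refine measure_mono fun x hx => ?_
      have hx : l < g x := hx
      show l' < ENNReal.ofReal |g x|
      rw [abs_of_nonneg (hg0 x)]
      exact hcon.trans_le (ENNReal.ofReal_le_ofReal hx.le)
    exact absurd (this.trans hl') (not_le.2 hsa)
  refine h1.trans ?_
  set T : ℝ := (min (ENNReal.ofReal t) a).toReal with hT
  have hne : min (ENNReal.ofReal t) a ≠ ⊤ :=
    ne_top_of_le_ne_top ENNReal.ofReal_ne_top (min_le_left _ _)
  calc min (ENNReal.ofReal t) a = ENNReal.ofReal T := (ENNReal.ofReal_toReal hne).symm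
    _ = volume (Ioo 0 T) := by simp
    _ ≤ _ := by
      rw [Measure.restrict_apply' measurableSet_Ioo]
      refine measure_mono fun s hs => ?_
      have h3 : ENNReal.ofReal s < min (ENNReal.ofReal t) a := by
        rw [ENNReal.ofReal_lt_iff_lt_toReal hs.1.le hne]; exact hs.2
      refine ⟨key s hs.1 (h3.trans_le (min_le_right _ _)), hs.1, ?_⟩
      exact (ENNReal.ofReal_lt_ofReal_iff_of_nonneg hs.1.le).1 (h3.trans_le (min_le_left _ _))

/-- The total growth of the means, summed over the radii of a family of balls with centres moving at
bounded speed. Fubini's theorem turns the left side into `∫ G(s) J(s) ds` with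
`J(s) = ∫_{r > max(r₀, (s/ω)^{1/n})} r⁻ⁿ dr`, which is bounded for `s ≤ 1` and is at most a multiple
of `s^{1/n-1}` for `s > 1`. -/
lemma lintegral_growth_lt_top {n : ℕ} (hn : 2 ≤ n) {N : RINorm (volume.restrict (Ioi (0 : ℝ)))}
    (hX : N.assoc (fun t => ENNReal.ofReal (t ^ ((1 : ℝ) / n - 1)) *
      (Ioi (1 : ℝ)).indicator 1 t) < ⊤) {G : ℝ → ℝ≥0∞} (hGm : Measurable G) (hG : N.ρ G < ⊤)
    {ω r₀ : ℝ} (hω : 0 < ω) (hr₀ : 0 < r₀) :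
    ∫⁻ r in Ioi r₀, ENNReal.ofReal (r ^ n)⁻¹ * ∫⁻ s in Ioo 0 (ω * r ^ n), G s < ⊤ := by
  have hn0 : n ≠ 0 := by omega
  have hnR : (2 : ℝ) ≤ n := by exact_mod_cast hn
  have tail : ∀ R : ℝ, 0 < R →
      ∫⁻ r in Ioi R, ENNReal.ofReal (r ^ n)⁻¹ ≤ ENNReal.ofReal (R ^ (1 - n : ℝ)) := by
    intro R hR
    have e : ∫⁻ r in Ioi R, ENNReal.ofReal (r ^ n)⁻¹ =
        ∫⁻ r in Ioi R, ENNReal.ofReal (r ^ (-n : ℝ)) := by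
      refine setLIntegral_congr_fun measurableSet_Ioi fun r hr => ?_
      have : 0 < r := hR.trans hr
      simp only [Real.rpow_neg this.le, Real.rpow_natCast]
    rw [e, ← ofReal_integral_eq_lintegral_ofReal
      (integrableOn_Ioi_rpow_of_lt (by linarith) hR)
      ((ae_restrict_mem measurableSet_Ioi).mono fun r hr =>
        Real.rpow_nonneg (hR.trans hr).le _),
      integral_Ioi_rpow_of_lt (by linarith) hR]
    refine ENNReal.ofReal_le_ofReal ?_
    have e2 : (-n : ℝ) + 1 = 1 - n := by ring
    rw [e2, ← neg_div_neg_eq, neg_neg]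
    refine div_le_self (Real.rpow_nonneg hR.le _) (by linarith)
  set J : ℝ → ℝ≥0∞ := fun s => ∫⁻ r in Ioi r₀, ENNReal.ofReal (r ^ n)⁻¹ *
    (Iio (ω * r ^ n)).indicator 1 s with hJ
  have hswap : ∫⁻ r in Ioi r₀, ENNReal.ofReal (r ^ n)⁻¹ * ∫⁻ s in Ioo 0 (ω * r ^ n), G s
      = ∫⁻ s in Ioi 0, G s * J s := by
    have e1 : ∀ r : ℝ, ENNReal.ofReal (r ^ n)⁻¹ * ∫⁻ s in Ioo 0 (ω * r ^ n), G s =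
        ∫⁻ s in Ioi 0, G s * (ENNReal.ofReal (r ^ n)⁻¹ * (Iio (ω * r ^ n)).indicator 1 s) := by
      intro r
      rw [← lintegral_const_mul _ hGm, ← Ioi_inter_Iio, inter_comm,
        ← Measure.restrict_restrict measurableSet_Iio, ← lintegral_indicator measurableSet_Iio]
      refine lintegral_congr fun s => ?_
      by_cases h : s ∈ Iio (ω * r ^ n) <;> simp [h, mul_comm]
    have hmeas : Measurable (Function.uncurry fun r s : ℝ =>
        ENNReal.ofReal (r ^ n)⁻¹ * (Iio (ω * r ^ n)).indicator (1 : ℝ → ℝ≥0∞) s) := by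
      have hS : MeasurableSet {p : ℝ × ℝ | p.2 < ω * p.1 ^ n} :=
        measurableSet_lt measurable_snd (by fun_prop)
      have : (Function.uncurry fun r s : ℝ =>
        ENNReal.ofReal (r ^ n)⁻¹ * (Iio (ω * r ^ n)).indicator (1 : ℝ → ℝ≥0∞) s) =
        fun p => ENNReal.ofReal (p.1 ^ n)⁻¹ *
          {p : ℝ × ℝ | p.2 < ω * p.1 ^ n}.indicator (1 : ℝ × ℝ → ℝ≥0∞) p := by
        ext ⟨r, s⟩
        simp [Function.uncurry, indicator]
      rw [this]
      exact (by fun_prop : Measurable fun p : ℝ × ℝ => ENNReal.ofReal (p.1 ^ n)⁻¹).mul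
        (measurable_one.indicator hS)
    simp_rw [e1]
    rw [lintegral_lintegral_swap]
    · refine lintegral_congr fun s => ?_
      rw [lintegral_const_mul]
      exact hmeas.comp (measurable_id.prodMk measurable_const)
    · exact ((hGm.comp measurable_snd).mul hmeas).aemeasurable
  rw [hswap]
  set C₁ : ℝ≥0∞ := ENNReal.ofReal (r₀ ^ (1 - n : ℝ))
  set C₂ : ℝ≥0∞ := ENNReal.ofReal ((ω⁻¹) ^ ((1 : ℝ) / n - 1))
  set h : ℝ → ℝ≥0∞ := fun t => ENNReal.ofReal (t ^ ((1 : ℝ) / n - 1)) *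
      (Ioi (1 : ℝ)).indicator 1 t with hh
  have hhm : Measurable h := by
    exact (by fun_prop : Measurable fun t : ℝ => ENNReal.ofReal (t ^ ((1 : ℝ) / n - 1))).mul
      (measurable_one.indicator measurableSet_Ioi)
  have hJle : ∀ s ∈ Ioi (0 : ℝ), G s * J s ≤
      C₁ * (Ioc (0 : ℝ) 1).indicator G s + C₂ * (G s * h s) := by
    intro s hs
    have hs : 0 < s := hs
    rcases le_or_gt s 1 with hs1 | hs1
    · have : J s ≤ C₁ := by
        refine le_trans (lintegral_mono fun r => ?_) (tail r₀ hr₀)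
        by_cases h : s ∈ Iio (ω * r ^ n) <;> simp [h]
      rw [indicator_of_mem (show s ∈ Ioc (0 : ℝ) 1 from ⟨hs, hs1⟩)]
      calc G s * J s ≤ G s * C₁ := by gcongr
        _ = C₁ * G s := mul_comm _ _
        _ ≤ _ := le_self_add
    · set R : ℝ := (s * ω⁻¹) ^ ((1 : ℝ) / n) with hR
      have hsω : 0 < s * ω⁻¹ := by positivity
      have hRpos : 0 < R := Real.rpow_pos_of_pos hsω _
      have hRn : R ^ n = s * ω⁻¹ := by
        rw [hR, one_div, Real.rpow_inv_natCast_pow hsω.le hn0]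
      have hJR : J s ≤ C₂ * ENNReal.ofReal (s ^ ((1 : ℝ) / n - 1)) := by
        calc J s ≤ ∫⁻ r in Ioi r₀, (Ioi R).indicator (fun r => ENNReal.ofReal (r ^ n)⁻¹) r := by
              refine setLIntegral_mono' measurableSet_Ioi fun r hr => ?_
              have hr : 0 < r := hr₀.trans hr
              by_cases h : s ∈ Iio (ω * r ^ n)
              · have : r ∈ Ioi R := by
                  refine lt_of_pow_lt_pow_left₀ n hr.le ?_
                  rw [hRn, ← div_eq_mul_inv, div_lt_iff₀ hω, mul_comm]
                  exact h
                simp [h, this]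
              · simp [h]
          _ ≤ ∫⁻ r, (Ioi R).indicator (fun r => ENNReal.ofReal (r ^ n)⁻¹) r :=
              setLIntegral_le_lintegral _ _
          _ = ∫⁻ r in Ioi R, ENNReal.ofReal (r ^ n)⁻¹ := lintegral_indicator measurableSet_Ioi _
          _ ≤ ENNReal.ofReal (R ^ (1 - n : ℝ)) := tail R hRpos
          _ = _ := by
              rw [← ENNReal.ofReal_mul (by positivity), hR, ← Real.rpow_mul hsω.le]
              have : (1 : ℝ) / n * (1 - n) = 1 / n - 1 := by field_simp
              rw [this, Real.mul_rpow hs.le (by positivity), mul_comm]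
      have : h s = ENNReal.ofReal (s ^ ((1 : ℝ) / n - 1)) := by
        simp [hh, hs1]
      rw [this]
      calc G s * J s ≤ G s * (C₂ * ENNReal.ofReal (s ^ ((1 : ℝ) / n - 1))) := by gcongr
        _ = C₂ * (G s * ENNReal.ofReal (s ^ ((1 : ℝ) / n - 1))) := by ring
        _ ≤ _ := le_add_self
  calc ∫⁻ s in Ioi 0, G s * J s
      ≤ ∫⁻ s in Ioi 0, (C₁ * (Ioc (0 : ℝ) 1).indicator G s + C₂ * (G s * h s)) :=
        setLIntegral_mono' measurableSet_Ioi hJle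
    _ = C₁ * (∫⁻ s in Ioc (0 : ℝ) 1, G s) + C₂ * ∫⁻ s in Ioi 0, G s * h s := by
        have hGh : Measurable fun s => G s * h s := hGm.mul hhm
        rw [lintegral_add_right _ (hGh.const_mul _),
          lintegral_const_mul _ (hGm.indicator measurableSet_Ioc),
          lintegral_const_mul _ hGh, lintegral_indicator measurableSet_Ioc,
          Measure.restrict_restrict measurableSet_Ioc,
          inter_eq_left.2 (Ioc_subset_Ioi_self : Ioc (0 : ℝ) 1 ⊆ Ioi 0)]
    _ < ⊤ := ENNReal.add_lt_top.2
        ⟨ENNReal.mul_lt_top ENNReal.ofReal_lt_top (setLIntegral_lt_top hG 1),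
          ENNReal.mul_lt_top ENNReal.ofReal_lt_top (lintegral_mul_lt_top N hG hX)⟩

/-! ### Means over homothetic balls -/

/-- The first inclusion is tested at the point of `closedBall c r` farthest from `c'`. -/
lemma dist_center_le {n : ℕ} (hn : 2 ≤ n) {c c' : Euc n} {r r' : ℝ} (hr : 0 < r)
    (h : Metric.ball c r ⊆ Metric.ball c' r') : ‖c' - c‖ ≤ r' - r := by
  have hne : Nonempty (Fin n) := ⟨⟨0, by omega⟩⟩
  have hcl : Metric.closedBall c r ⊆ Metric.closedBall c' r' := by
    rw [← closure_ball c hr.ne']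
    exact (closure_mono h).trans Metric.closure_ball_subset_closedBall
  obtain ⟨e, he, hce⟩ : ∃ e : Euc n, ‖e‖ = 1 ∧ c - c' = ‖c - c'‖ • e := by
    by_cases h0 : c - c' = 0
    · obtain ⟨e, he⟩ := exists_norm_eq (Euc n) zero_le_one
      exact ⟨e, he, by simp [h0]⟩
    · refine ⟨‖c - c'‖⁻¹ • (c - c'), norm_smul_inv_norm h0, ?_⟩
      rw [smul_smul, mul_inv_cancel₀ (norm_ne_zero_iff.2 h0), one_smul]
  have hmem : c + r • e ∈ Metric.closedBall c r := by
    simp [norm_smul, he, abs_of_pos hr]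
  have h2 := hcl hmem
  rw [mem_closedBall_iff_norm] at h2
  have h3 : c + r • e - c' = (‖c - c'‖ + r) • e := by
    rw [add_smul, ← hce]; abel
  rw [h3, norm_smul, he, mul_one, Real.norm_of_nonneg (by positivity)] at h2
  rw [norm_sub_rev]; linarith

/-- The kernel `r⁻ⁿ ζ((y - a)/r)`: a profile `ζ` transported by the homothety of centre `a` and
ratio `r`. When `ζ` approximates the indicator of the ball `B(b, 1)`, it averages over the ball
`B(a + r b, r)`. -/
def dilKer {n : ℕ} (a : Euc n) (ζ : Euc n → ℝ) (r : ℝ) (y : Euc n) : ℝ :=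
  (r ^ n)⁻¹ * ζ (r⁻¹ • (y - a))

/-- The `r`-derivative of `dilKer`, for `r > 0`. -/
def dilKerDeriv {n : ℕ} (a : Euc n) (ζ : Euc n → ℝ) (r : ℝ) (y : Euc n) : ℝ :=
  -((r ^ (n + 1))⁻¹ * (n * ζ (r⁻¹ • (y - a)) + fderiv ℝ ζ (r⁻¹ • (y - a)) (r⁻¹ • (y - a))))

/-- The components of the vector field `((y - a)/r) * dilKer`, of divergence `-dilKerDeriv` for `r > 0`. -/
def dilField {n : ℕ} (a : Euc n) (ζ : Euc n → ℝ) (r : ℝ) (i : Fin n) (y : Euc n) : ℝ :=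
  (r⁻¹ • (y - a)) i * dilKer a ζ r y

lemma hasDerivAt_dilKer {n : ℕ} (a : Euc n) {ζ : Euc n → ℝ} (hζ : ContDiff ℝ (⊤ : ℕ∞) ζ)
    {r : ℝ} (hr : 0 < r) (y : Euc n) :
    HasDerivAt (fun r => dilKer a ζ r y) (dilKerDeriv a ζ r y) r := by
  have h1 : HasDerivAt (fun r : ℝ => r⁻¹ • (y - a)) ((-(r ^ 2)⁻¹) • (y - a)) r :=
    (hasDerivAt_inv hr.ne').smul_const _
  have h2 : HasFDerivAt ζ (fderiv ℝ ζ (r⁻¹ • (y - a))) (r⁻¹ • (y - a)) :=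
    ((hζ.differentiable (by simp)) _).hasFDerivAt
  have h3 := h2.comp_hasDerivAt r h1
  have h4 : HasDerivAt (fun r : ℝ => (r ^ n)⁻¹) (-(n * r ^ (n - 1)) / (r ^ n) ^ 2) r :=
    (hasDerivAt_pow n r).inv (pow_ne_zero _ hr.ne')
  have h5 : HasDerivAt (fun r => dilKer a ζ r y) _ r := h4.mul h3
  refine h5.congr_deriv (Eq.symm ?_)
  have e : (-(r ^ 2)⁻¹) • (y - a) = (-r⁻¹) • (r⁻¹ • (y - a)) := by
    rw [smul_smul]; congr 1; field_simp
  have e' : fderiv ℝ ζ (r⁻¹ • (y - a)) ((-(r ^ 2)⁻¹) • (y - a)) =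
      -r⁻¹ * fderiv ℝ ζ (r⁻¹ • (y - a)) (r⁻¹ • (y - a)) := by rw [e, map_smul, smul_eq_mul]
  rw [dilKerDeriv, e']
  generalize fderiv ℝ ζ (r⁻¹ • (y - a)) (r⁻¹ • (y - a)) = D
  rcases n with _ | n
  · simp
  · simp only [Nat.add_sub_cancel]
    field_simp
    ring

lemma contDiff_dilation {n : ℕ} (a : Euc n) (r : ℝ) :
    ContDiff ℝ (⊤ : ℕ∞) (fun y : Euc n => r⁻¹ • (y - a)) := by
  fun_prop

lemma contDiff_dilKer {n : ℕ} (a : Euc n) {ζ : Euc n → ℝ} (hζ : ContDiff ℝ (⊤ : ℕ∞) ζ)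
    (r : ℝ) : ContDiff ℝ (⊤ : ℕ∞) (dilKer a ζ r) := by
  unfold dilKer
  exact contDiff_const.mul (hζ.comp (contDiff_dilation a r))

lemma contDiff_dilField {n : ℕ} (a : Euc n) {ζ : Euc n → ℝ} (hζ : ContDiff ℝ (⊤ : ℕ∞) ζ)
    (r : ℝ) (i : Fin n) : ContDiff ℝ (⊤ : ℕ∞) (dilField a ζ r i) := by
  unfold dilField
  refine ContDiff.mul ?_ (contDiff_dilKer a hζ r)
  exact (EuclideanSpace.proj (𝕜 := ℝ) i : Euc n →L[ℝ] ℝ).contDiff.comp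
    (contDiff_dilation a r)

/-- Euler's homogeneity relation for the kernel: `div ((y - a)/r * K) = -∂K/∂r`. -/
lemma sum_fderiv_dilField {n : ℕ} (a : Euc n) {ζ : Euc n → ℝ} (hζ : ContDiff ℝ (⊤ : ℕ∞) ζ)
    {r : ℝ} (hr : 0 < r) (y : Euc n) :
    ∑ i, fderiv ℝ (dilField a ζ r i) y (EuclideanSpace.single i 1) = - dilKerDeriv a ζ r y := by
  set w := r⁻¹ • (y - a) with hw
  have hW : HasFDerivAt (fun y : Euc n => r⁻¹ • (y - a))
      (r⁻¹ • ContinuousLinearMap.id ℝ (Euc n)) y :=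
    ((hasFDerivAt_id y).sub_const a).const_smul r⁻¹
  have h2 : HasFDerivAt ζ (fderiv ℝ ζ w) w :=
    ((hζ.differentiable (by simp)) _).hasFDerivAt
  have hK : HasFDerivAt (dilKer a ζ r)
      ((r ^ n)⁻¹ • (fderiv ℝ ζ w).comp (r⁻¹ • ContinuousLinearMap.id ℝ (Euc n))) y :=
    (h2.comp y hW).const_mul _
  have hi : ∀ i, fderiv ℝ (dilField a ζ r i) y (EuclideanSpace.single i 1) =
      (r ^ (n + 1))⁻¹ * (ζ w + w i * fderiv ℝ ζ w (EuclideanSpace.single i 1)) := by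
    intro i
    have hp : HasFDerivAt (fun y : Euc n => (r⁻¹ • (y - a)) i)
      ((EuclideanSpace.proj (𝕜 := ℝ) i).comp (r⁻¹ • ContinuousLinearMap.id ℝ (Euc n))) y :=
      ((EuclideanSpace.proj (𝕜 := ℝ) i).hasFDerivAt).comp y hW
    have := (hp.mul hK).fderiv
    have e : dilField a ζ r i = (fun y : Euc n => (r⁻¹ • (y - a)) i) * dilKer a ζ r := rfl
    rw [e, this]
    simp [dilKer, ← hw]
    field_simp
    ring
  simp_rw [hi]
  rw [← Finset.mul_sum, Finset.sum_add_distrib, dilKerDeriv, neg_neg]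
  congr 2
  · simp [hw]
  · have : w = ∑ i, w i • EuclideanSpace.single i (1 : ℝ) := by
      simpa using ((EuclideanSpace.basisFun (Fin n) ℝ).sum_repr w).symm
    rw [← hw]
    conv_rhs => rw [this]
    have e2 : fderiv ℝ ζ w = fderiv ℝ ζ (∑ i, w i • EuclideanSpace.single i (1 : ℝ)) := by
      rw [← this]
    rw [← e2]
    simp [map_sum]

lemma smul_sub_mem_ball_iff {n : ℕ} {a b y : Euc n} {r : ℝ} (hr : 0 < r) :
    r⁻¹ • (y - a) ∈ Metric.ball b 1 ↔ y ∈ Metric.ball (a + r • b) r := by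
  have e : r⁻¹ • (y - a) - b = r⁻¹ • (y - (a + r • b)) := by
    rw [← sub_sub, smul_sub _ (y - a), smul_smul, inv_mul_cancel₀ hr.ne', one_smul]
  rw [mem_ball_iff_norm, mem_ball_iff_norm, e, norm_smul, Real.norm_of_nonneg (by positivity),
    inv_mul_lt_iff₀ hr, mul_one]

section Supported

variable {n : ℕ} {a b : Euc n} {ζ : Euc n → ℝ} {r : ℝ}

lemma dilKer_eq_zero (hr : 0 < r) (hsupp : ∀ z, z ∉ Metric.ball b 1 → ζ z = 0) {y : Euc n}
    (hy : y ∉ Metric.ball (a + r • b) r) : dilKer a ζ r y = 0 := by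
  have : r⁻¹ • (y - a) ∉ Metric.ball b 1 := by
    rwa [smul_sub_mem_ball_iff hr]
  rw [dilKer, hsupp _ this, mul_zero]

lemma norm_le_two (hb : ‖b‖ ≤ 1) {z : Euc n} (hz : z ∈ Metric.ball b 1) : ‖z‖ ≤ 2 := by
  rw [mem_ball_iff_norm] at hz
  have := norm_add_le (z - b) b
  rw [sub_add_cancel] at this
  linarith

/-- The support of the derivative is contained in the closed ball of radius `2 r` about `a`. -/
lemma dilKerDeriv_eq_zero (hr : 0 < r) (hb : ‖b‖ ≤ 1)
    (hsupp : ∀ z, z ∉ Metric.ball b 1 → ζ z = 0) {y : Euc n}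
    (hy : y ∉ Metric.closedBall a (2 * r)) : dilKerDeriv a ζ r y = 0 := by
  have h2 : r⁻¹ • (y - a) ∉ Metric.closedBall (0 : Euc n) 2 := by
    rw [mem_closedBall_iff_norm] at hy
    rw [mem_closedBall_zero_iff, norm_smul, Real.norm_of_nonneg (by positivity),
      inv_mul_le_iff₀ hr, mul_comm]
    exact hy
  have h3 : tsupport ζ ⊆ Metric.closedBall (0 : Euc n) 2 := by
    refine closure_minimal (fun z hz => ?_) Metric.isClosed_closedBall
    rw [mem_closedBall_zero_iff]
    refine norm_le_two hb ?_
    by_contra h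
    exact hz (hsupp z h)
  have h4 : r⁻¹ • (y - a) ∉ tsupport ζ := fun h => h2 (h3 h)
  have h5 : fderiv ℝ ζ (r⁻¹ • (y - a)) = 0 := by
    by_contra h
    exact h4 (support_fderiv_subset ℝ h)
  rw [dilKerDeriv, image_eq_zero_of_notMem_tsupport h4, h5]
  simp

lemma hasCompactSupport_dilKer (hr : 0 < r) (hsupp : ∀ z, z ∉ Metric.ball b 1 → ζ z = 0) :
    HasCompactSupport (dilKer a ζ r) :=
  HasCompactSupport.intro (isCompact_closedBall (a + r • b) r) fun _ hy =>
    dilKer_eq_zero hr hsupp fun h => hy (Metric.ball_subset_closedBall h)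

lemma hasCompactSupport_dilField (hr : 0 < r) (hsupp : ∀ z, z ∉ Metric.ball b 1 → ζ z = 0)
    (i : Fin n) : HasCompactSupport (dilField a ζ r i) :=
  (hasCompactSupport_dilKer hr hsupp).mul_left

lemma continuousOn_dilKerDeriv (hζ : ContDiff ℝ (⊤ : ℕ∞) ζ) :
    ContinuousOn (fun p : ℝ × Euc n => dilKerDeriv a ζ p.1 p.2) (Ioi 0 ×ˢ univ) := by
  have hc : Continuous ζ := hζ.continuous
  have hd : Continuous (fderiv ℝ ζ) := hζ.continuous_fderiv (by simp)
  have hinv : ContinuousOn (fun p : ℝ × Euc n => p.1⁻¹ • (p.2 - a)) (Ioi 0 ×ˢ univ) := by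
    refine ContinuousOn.smul (continuousOn_fst.inv₀ fun p hp => ?_) (by fun_prop)
    exact (mem_Ioi.1 hp.1).ne'
  unfold dilKerDeriv
  refine ContinuousOn.neg (ContinuousOn.mul ?_ (ContinuousOn.add ?_ ?_))
  · refine ContinuousOn.inv₀ (by fun_prop) fun p hp => ?_
    exact pow_ne_zero _ (mem_Ioi.1 hp.1).ne'
  · exact continuousOn_const.mul (hc.comp_continuousOn hinv)
  · exact (hd.comp_continuousOn hinv).clm_apply hinv

/-- Smoothed means along a family of homothetic balls are differentiable in the radius. -/
lemma hasDerivAt_smoothMean {u : Euc n → ℝ} (hu : LocallyIntegrable u volume) (hb : ‖b‖ ≤ 1)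
    (hζ : ContDiff ℝ (⊤ : ℕ∞) ζ) (hsupp : ∀ z, z ∉ Metric.ball b 1 → ζ z = 0) (hr : 0 < r) :
    HasDerivAt (fun r => ∫ y, u y * dilKer a ζ r y) (∫ y, u y * dilKerDeriv a ζ r y) r := by
  have hpos : ∀ x ∈ Icc (r / 2) (3 * r / 2), 0 < x := fun x hx => by linarith [hx.1]
  set S := Metric.closedBall a (3 * r) with hS
  have hsub : Icc (r / 2) (3 * r / 2) ×ˢ S ⊆ Ioi (0 : ℝ) ×ˢ (univ : Set (Euc n)) :=
    fun p hp => ⟨hpos _ hp.1, mem_univ _⟩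
  obtain ⟨C, hC⟩ := (isCompact_Icc.prod (isCompact_closedBall a (3 * r))).exists_bound_of_continuousOn
    ((continuousOn_dilKerDeriv (a := a) hζ).mono hsub)
  have hcont : Continuous (dilKerDeriv a ζ r) := by
    have : Continuous fun y : Euc n => ((r, y) : ℝ × Euc n) := by fun_prop
    exact (continuousOn_dilKerDeriv (a := a) hζ).comp_continuous this
      fun y => ⟨hr, mem_univ _⟩
  have hK : ∀ x, AEStronglyMeasurable (fun y => u y * dilKer a ζ x y) volume := fun x =>
    hu.aestronglyMeasurable.mul (contDiff_dilKer a hζ x).continuous.aestronglyMeasurable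
  have hnhds : Icc (r / 2) (3 * r / 2) ∈ nhds r := Icc_mem_nhds (by linarith) (by linarith)
  refine (hasDerivAt_integral_of_dominated_loc_of_deriv_le
    (F' := fun r y => u y * dilKerDeriv a ζ r y) (bound := S.indicator fun y => |u y| * C) (s := Icc (r / 2) (3 * r / 2))
    hnhds (Eventually.of_forall hK) ?_ ?_ ?_ ?_ ?_).2
  · exact hu.integrable_smul_right_of_hasCompactSupport (contDiff_dilKer a hζ r).continuous
      (hasCompactSupport_dilKer hr hsupp)
  · exact hu.aestronglyMeasurable.mul hcont.aestronglyMeasurable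
  · refine Eventually.of_forall fun y x hx => ?_
    by_cases hy : y ∈ S
    · rw [indicator_of_mem hy, norm_mul, Real.norm_eq_abs (u y)]
      exact mul_le_mul_of_nonneg_left (hC (x, y) ⟨hx, hy⟩) (abs_nonneg _)
    · have : y ∉ Metric.closedBall a (2 * x) := fun h =>
        hy (Metric.closedBall_subset_closedBall (by linarith [hx.2]) h)
      rw [indicator_of_notMem hy, dilKerDeriv_eq_zero (hpos x hx) hb hsupp this]
      simp
  · rw [integrable_indicator_iff measurableSet_closedBall]
    exact ((hu.integrableOn_isCompact (isCompact_closedBall a (3 * r))).abs).mul_const C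
  · exact Eventually.of_forall fun y x hx => (hasDerivAt_dilKer a hζ (hpos x hx) y).const_mul _

/-- The defining property of the weak gradient, tested against `dilField`. -/
lemma integral_dilKerDeriv {u : Euc n → ℝ} {V : Euc n → Fin n → ℝ} (hu : HasWeakGradient u V)
    (hζ : ContDiff ℝ (⊤ : ℕ∞) ζ) (hsupp : ∀ z, z ∉ Metric.ball b 1 → ζ z = 0) (hr : 0 < r) :
    ∫ y, u y * dilKerDeriv a ζ r y = ∫ y, ∑ i, V y i * dilField a ζ r i y := by
  have e : ∀ y, u y * dilKerDeriv a ζ r y =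
      -∑ i, u y * fderiv ℝ (dilField a ζ r i) y (EuclideanSpace.single i 1) := by
    intro y
    rw [← Finset.mul_sum, sum_fderiv_dilField a hζ hr]; ring
  simp_rw [e]
  rw [integral_neg, integral_finsetSum, integral_finsetSum, ← Finset.sum_neg_distrib]
  · refine Finset.sum_congr rfl fun i _ => ?_
    rw [hu.2.2 _ (contDiff_dilField a hζ r i) (hasCompactSupport_dilField hr hsupp i) i, neg_neg]
  · intro i _
    exact (hu.2.1 i).integrable_smul_right_of_hasCompactSupport
      (contDiff_dilField a hζ r i).continuous (hasCompactSupport_dilField hr hsupp i)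
  · intro i _
    refine hu.1.integrable_smul_right_of_hasCompactSupport
      (((contDiff_dilField a hζ r i).continuous_fderiv (by simp)).clm_apply continuous_const) ?_
    exact (hasCompactSupport_dilField hr hsupp i).fderiv_apply ℝ _

/-- Pointwise bound for the integrand of the derivative of a smoothed mean. -/
lemma enorm_sum_dilField_le (V : Euc n → Fin n → ℝ) (hb : ‖b‖ ≤ 1)
    (hsupp : ∀ z, z ∉ Metric.ball b 1 → ζ z = 0) (hζ1 : ∀ z, |ζ z| ≤ 1) (hr : 0 < r) (y : Euc n) :
    ‖∑ i, V y i * dilField a ζ r i y‖ₑ ≤ (Metric.ball (a + r • b) r).indicator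
      (fun y => ENNReal.ofReal (2 * (r ^ n)⁻¹) * ENNReal.ofReal (∑ i, |V y i|)) y := by
  by_cases hy : y ∈ Metric.ball (a + r • b) r
  · rw [indicator_of_mem hy, ← ENNReal.ofReal_mul (by positivity), ← ofReal_norm]
    refine ENNReal.ofReal_le_ofReal ?_
    rw [Finset.mul_sum]
    refine (norm_sum_le _ _).trans (Finset.sum_le_sum fun i _ => ?_)
    have hw : |(r⁻¹ • (y - a)) i| ≤ 2 := by
      refine (PiLp.norm_apply_le (p := 2) (r⁻¹ • (y - a)) i).trans (norm_le_two hb ?_)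
      rwa [smul_sub_mem_ball_iff hr]
    rw [dilField, dilKer, Real.norm_eq_abs, abs_mul, abs_mul, abs_mul,
      abs_of_pos (by positivity : 0 < (r ^ n)⁻¹), mul_comm]
    gcongr
    calc (r ^ n)⁻¹ * |ζ (r⁻¹ • (y - a))| ≤ (r ^ n)⁻¹ * 1 := by gcongr; exact hζ1 _
      _ = _ := mul_one _
  · have : ∀ i, dilField a ζ r i y = 0 := fun i => by
      rw [dilField, dilKer_eq_zero hr hsupp hy, mul_zero]
    simp [this]

end Supported

/-! ### Comparison of the means over two nested balls -/

lemma volume_ball_eq {n : ℕ} (hn : 2 ≤ n) (x : Euc n) {r : ℝ} (hr : 0 < r) :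
    volume (Metric.ball x r) =
      ENNReal.ofReal ((volume (Metric.ball (0 : Euc n) 1)).toReal * r ^ n) := by
  have hne : Nonempty (Fin n) := ⟨⟨0, by omega⟩⟩
  rw [Measure.addHaar_ball volume x hr.le, mul_comm (ENNReal.toReal _),
    ENNReal.ofReal_mul (by positivity), ENNReal.ofReal_toReal measure_ball_lt_top.ne,
    finrank_euclideanSpace_fin]

lemma smoothMean_sub_le {n : ℕ} (hn : 2 ≤ n) {N : RINorm (volume.restrict (Ioi (0 : ℝ)))}
    {u : Euc n → ℝ} {V : Euc n → Fin n → ℝ} (hu : HasWeakGradient u V)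
    (hV : riNorm N volume (fun x => ∑ i, |V x i|) < ⊤)
    {a b : Euc n} (hb : ‖b‖ ≤ 1) {ζ : Euc n → ℝ} (hζ : ContDiff ℝ (⊤ : ℕ∞) ζ)
    (hsupp : ∀ z, z ∉ Metric.ball b 1 → ζ z = 0) (hζ1 : ∀ z, |ζ z| ≤ 1)
    {r₀ r₁ : ℝ} (hr₀ : 0 < r₀) (h01 : r₀ ≤ r₁)
    {A : ℝ≥0∞} (hA : A < ⊤)
    (hAle : ∫⁻ r in Ioi r₀, ENNReal.ofReal (r ^ n)⁻¹ *
      ∫⁻ s in Ioo 0 ((volume (Metric.ball (0 : Euc n) 1)).toReal * r ^ n),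
        rearr volume (fun x => ∑ i, |V x i|) s ≤ A) :
    |(∫ y, u y * dilKer a ζ r₁ y) - ∫ y, u y * dilKer a ζ r₀ y| ≤ (2 * A).toReal := by
  set g : Euc n → ℝ := fun x => ∑ i, |V x i| with hg
  set ω := (volume (Metric.ball (0 : Euc n) 1)).toReal with hω
  set m : ℝ → ℝ := fun r => ∫ y, u y * dilKer a ζ r y with hm
  have hg0 : ∀ x, 0 ≤ g x := fun x => Finset.sum_nonneg fun i _ => abs_nonneg _
  have hgm : AEMeasurable g volume :=
    Finset.aemeasurable_fun_sum _ fun i _ =>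
      (hu.2.1 i).aestronglyMeasurable.aemeasurable.norm
  have hder : ∀ r, 0 < r → HasDerivAt m (∫ y, ∑ i, V y i * dilField a ζ r i y) r := fun r hr => by
    have := hasDerivAt_smoothMean (a := a) hu.1 hb hζ hsupp hr
    rwa [integral_dilKerDeriv hu hζ hsupp hr] at this
  have hbound : ∀ r, 0 < r → ‖deriv m r‖ₑ ≤
      2 * (ENNReal.ofReal (r ^ n)⁻¹ * ∫⁻ s in Ioo 0 (ω * r ^ n), rearr volume g s) := by
    intro r hr
    rw [(hder r hr).deriv]
    calc ‖∫ y, ∑ i, V y i * dilField a ζ r i y‖ₑ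
        ≤ ∫⁻ y, ‖∑ i, V y i * dilField a ζ r i y‖ₑ := enorm_integral_le_lintegral_enorm _
      _ ≤ ∫⁻ y, (Metric.ball (a + r • b) r).indicator
            (fun y => ENNReal.ofReal (2 * (r ^ n)⁻¹) * ENNReal.ofReal (g y)) y :=
          lintegral_mono fun y => enorm_sum_dilField_le V hb hsupp hζ1 hr y
      _ = ENNReal.ofReal (2 * (r ^ n)⁻¹) *
            ∫⁻ y in Metric.ball (a + r • b) r, ENNReal.ofReal (g y) := by
          rw [lintegral_indicator measurableSet_ball,
            lintegral_const_mul' _ _ ENNReal.ofReal_ne_top]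
      _ ≤ ENNReal.ofReal (2 * (r ^ n)⁻¹) * ∫⁻ s in Ioo 0 (ω * r ^ n), rearr volume g s := by
          gcongr
          exact setLIntegral_le_rearr hg0 hgm (fun s hs => rearrE_lt_top hV hs)
            (volume_ball_eq hn _ hr)
      _ = _ := by
          rw [ENNReal.ofReal_mul zero_le_two, mul_assoc]; norm_num
  have hlint : ∫⁻ r in Ioc r₀ r₁, ‖deriv m r‖ₑ ≤ 2 * A := by
    calc ∫⁻ r in Ioc r₀ r₁, ‖deriv m r‖ₑ
        ≤ ∫⁻ r in Ioi r₀, ‖deriv m r‖ₑ := lintegral_mono_set Ioc_subset_Ioi_self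
      _ ≤ ∫⁻ r in Ioi r₀, 2 * (ENNReal.ofReal (r ^ n)⁻¹ *
            ∫⁻ s in Ioo 0 (ω * r ^ n), rearr volume g s) :=
          setLIntegral_mono' measurableSet_Ioi fun r hr => hbound r (hr₀.trans hr)
      _ ≤ 2 * A := by
          rw [lintegral_const_mul' _ _ (by simp)]
          gcongr
  have hfin : 2 * A < ⊤ := ENNReal.mul_lt_top (by simp) hA
  have hint : IntervalIntegrable (deriv m) volume r₀ r₁ := by
    rw [intervalIntegrable_iff_integrableOn_Ioc_of_le h01]
    exact ⟨(measurable_deriv m).aestronglyMeasurable, hlint.trans_lt hfin⟩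
  have hftc : ∫ r in r₀..r₁, deriv m r = m r₁ - m r₀ := by
    refine intervalIntegral.integral_eq_sub_of_hasDerivAt (fun r hr => ?_) hint
    rw [uIcc_of_le h01] at hr
    exact (hder r (hr₀.trans_le hr.1)).differentiableAt.hasDerivAt
  rw [intervalIntegral.integral_of_le h01] at hftc
  change |m r₁ - m r₀| ≤ _
  rw [← hftc, ← Real.norm_eq_abs, ← toReal_enorm]
  exact ENNReal.toReal_mono hfin.ne ((enorm_integral_le_lintegral_enorm _).trans hlint)

/-- Smooth profiles converging to the indicator of `B(b, 1)`; the support condition keeps every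
smoothed mean inside the ball it approximates. -/
lemma exists_profiles {n : ℕ} (b : Euc n) : ∃ ζ : ℕ → Euc n → ℝ,
    (∀ j, ContDiff ℝ (⊤ : ℕ∞) (ζ j)) ∧ (∀ j z, z ∉ Metric.ball b 1 → ζ j z = 0) ∧
    (∀ j z, |ζ j z| ≤ 1) ∧ ∀ z ∈ Metric.ball b 1, ∀ᶠ j in atTop, ζ j z = 1 := by
  have hpos : ∀ j : ℕ, (0 : ℝ) < 1 - 1 / ((j + 1 : ℕ) + 1) ∧ (1 : ℝ) - 1 / ((j + 1 : ℕ) + 1) < 1 := by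
    intro j
    have h : (0 : ℝ) < 1 / ((j + 1 : ℕ) + 1) := Nat.one_div_pos_of_nat
    have h2 : (1 : ℝ) / ((j + 1 : ℕ) + 1) < 1 := by
      rw [div_lt_one (by positivity)]; push_cast; linarith [(Nat.cast_nonneg j : (0 : ℝ) ≤ j)]
    exact ⟨by linarith, by linarith⟩
  let f : ℕ → ContDiffBump b := fun j =>
    ⟨1 - 1 / ((j + 1 : ℕ) + 1), 1, (hpos j).1, (hpos j).2⟩
  refine ⟨fun j => f j, fun j => (f j).contDiff, fun j z hz => ?_, fun j z => ?_, fun z hz => ?_⟩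
  · have : z ∉ Function.support (f j) := by rw [(f j).support_eq]; exact hz
    simpa using this
  · rw [abs_of_nonneg (f j).nonneg]; exact (f j).le_one
  · have hlim : Tendsto (fun j : ℕ => (1 : ℝ) - 1 / ((j + 1 : ℕ) + 1)) atTop (nhds (1 - 0)) :=
      (tendsto_const_nhds).sub
        ((tendsto_one_div_add_atTop_nhds_zero_nat (𝕜 := ℝ)).comp (tendsto_add_atTop_nat 1))
    rw [sub_zero] at hlim
    filter_upwards [hlim.eventually (lt_mem_nhds (Metric.mem_ball.1 hz))] with j hj
    exact (f j).one_of_mem_closedBall (Metric.mem_closedBall.2 hj.le)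

lemma tendsto_smoothMean {n : ℕ} {u : Euc n → ℝ} (hu : LocallyIntegrable u volume) {a b : Euc n}
    {ζ : ℕ → Euc n → ℝ} (hζ : ∀ j, ContDiff ℝ (⊤ : ℕ∞) (ζ j))
    (hsupp : ∀ j z, z ∉ Metric.ball b 1 → ζ j z = 0) (hζ1 : ∀ j z, |ζ j z| ≤ 1)
    (hlim : ∀ z ∈ Metric.ball b 1, ∀ᶠ j in atTop, ζ j z = 1) {r : ℝ} (hr : 0 < r) :
    Tendsto (fun j => ∫ y, u y * dilKer a (ζ j) r y) atTop
      (nhds ((r ^ n)⁻¹ * ∫ y in Metric.ball (a + r • b) r, u y)) := by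
  have e : (r ^ n)⁻¹ * ∫ y in Metric.ball (a + r • b) r, u y =
      ∫ y, (Metric.ball (a + r • b) r).indicator (fun y => (r ^ n)⁻¹ * u y) y := by
    rw [integral_indicator measurableSet_ball, integral_const_mul]
  have hint : IntegrableOn u (Metric.ball (a + r • b) r) volume :=
    (hu.integrableOn_isCompact (isCompact_closedBall (a + r • b) r)).mono_set
      Metric.ball_subset_closedBall
  rw [e]
  refine tendsto_integral_of_dominated_convergence
    ((Metric.ball (a + r • b) r).indicator fun y => (r ^ n)⁻¹ * |u y|) (fun j => ?_) ?_ ?_ ?_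
  · exact hu.aestronglyMeasurable.mul (contDiff_dilKer a (hζ j) r).continuous.aestronglyMeasurable
  · rw [integrable_indicator_iff measurableSet_ball]
    exact hint.abs.const_mul _
  · refine fun j => Eventually.of_forall fun y => ?_
    by_cases hy : y ∈ Metric.ball (a + r • b) r
    · rw [indicator_of_mem hy, dilKer, norm_mul, norm_mul, Real.norm_eq_abs, Real.norm_eq_abs,
        Real.norm_eq_abs, abs_of_pos (by positivity : 0 < (r ^ n)⁻¹), mul_comm]
      gcongr
      calc (r ^ n)⁻¹ * |ζ j (r⁻¹ • (y - a))| ≤ (r ^ n)⁻¹ * 1 := by gcongr; exact hζ1 _ _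
        _ = _ := mul_one _
    · rw [dilKer_eq_zero hr (hsupp j) hy, indicator_of_notMem hy]; simp
  · refine Eventually.of_forall fun y => ?_
    by_cases hy : y ∈ Metric.ball (a + r • b) r
    · have hw : r⁻¹ • (y - a) ∈ Metric.ball b 1 := by
        rwa [smul_sub_mem_ball_iff hr]
      refine tendsto_const_nhds.congr' ?_
      filter_upwards [hlim _ hw] with j hj
      rw [indicator_of_mem hy, dilKer, hj]; ring
    · rw [indicator_of_notMem hy]
      refine tendsto_const_nhds.congr fun j => ?_
      rw [dilKer_eq_zero hr (hsupp j) hy, mul_zero]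

/-- The balls interpolating between two nested balls `B(c₀, r₀) ⊆ B(c₁, r₁)` are the homothetic
balls `B(a + r b, r)`, `r₀ ≤ r ≤ r₁`, with `b = (c₁ - c₀)/(r₁ - r₀)` and `a = c₀ - r₀ b`. -/
lemma mean_sub_le {n : ℕ} (hn : 2 ≤ n) {N : RINorm (volume.restrict (Ioi (0 : ℝ)))}
    {u : Euc n → ℝ} {V : Euc n → Fin n → ℝ} (hu : HasWeakGradient u V)
    (hV : riNorm N volume (fun x => ∑ i, |V x i|) < ⊤)
    {c₀ c₁ : Euc n} {r₀ r₁ : ℝ} (hr₀ : 0 < r₀)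
    (hsub : Metric.ball c₀ r₀ ⊆ Metric.ball c₁ r₁) {A : ℝ≥0∞} (hA : A < ⊤)
    (hAle : ∫⁻ r in Ioi r₀, ENNReal.ofReal (r ^ n)⁻¹ *
      ∫⁻ s in Ioo 0 ((volume (Metric.ball (0 : Euc n) 1)).toReal * r ^ n),
        rearr volume (fun x => ∑ i, |V x i|) s ≤ A) :
    |(r₁ ^ n)⁻¹ * (∫ y in Metric.ball c₁ r₁, u y) - (r₀ ^ n)⁻¹ * ∫ y in Metric.ball c₀ r₀, u y|
      ≤ (2 * A).toReal := by
  have hd := dist_center_le hn hr₀ hsub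
  have h01 : r₀ ≤ r₁ := by linarith [norm_nonneg (c₁ - c₀)]
  rcases h01.eq_or_lt with h | h
  · have hc : c₁ = c₀ := by
      rw [← h, sub_self] at hd
      exact sub_eq_zero.1 (norm_le_zero_iff.1 hd)
    rw [← h, hc, sub_self, abs_zero]
    exact ENNReal.toReal_nonneg
  have hpos : 0 < r₁ - r₀ := sub_pos.2 h
  set b : Euc n := (r₁ - r₀)⁻¹ • (c₁ - c₀) with hb_def
  set a : Euc n := c₀ - r₀ • b with ha_def
  have hb : ‖b‖ ≤ 1 := by
    rw [hb_def, norm_smul, Real.norm_of_nonneg (inv_pos.2 hpos).le, inv_mul_le_iff₀ hpos, mul_one]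
    exact hd
  have e0 : a + r₀ • b = c₀ := by rw [ha_def]; abel
  have e1 : a + r₁ • b = c₁ := by
    have : a + r₁ • b = c₀ + (r₁ - r₀) • b := by rw [ha_def, sub_smul]; abel
    rw [this, hb_def, smul_smul, mul_inv_cancel₀ hpos.ne', one_smul]; abel
  obtain ⟨ζ, h1, h2, h3, h4⟩ := exists_profiles b
  have t1 := tendsto_smoothMean (a := a) hu.1 h1 h2 h3 h4 (hr₀.trans h)
  have t0 := tendsto_smoothMean (a := a) hu.1 h1 h2 h3 h4 hr₀
  rw [e1] at t1
  rw [e0] at t0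
  exact le_of_tendsto (t1.sub t0).abs (Eventually.of_forall fun j =>
    smoothMean_sub_le hn hu hV hb (h1 j) (h2 j) (h3 j) hr₀ h01 hA hAle)

/-- If X is an r.i. space over ℝⁿ with t^{1/n−1}χ_{(1,∞)} ∈ X'(0,∞),
u ∈ V¹X(ℝⁿ), and (B_k) is an increasing sequence of balls, then the sequence of integral
means λ_k = (1/|B_k|)∫_{B_k} u is bounded; in particular it has a convergent subsequence. -/
theorem stmt_4 (n : ℕ) (hn : 2 ≤ n) (N : RINorm (volume.restrict (Ioi (0 : ℝ))))
    (hX : N.assoc (fun t => ENNReal.ofReal (t ^ ((1 : ℝ) / n - 1)) *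
      (Ioi (1 : ℝ)).indicator 1 t) < ⊤)
    (u : Euc n → ℝ) (V : Euc n → Fin n → ℝ) (hu : HasWeakGradient u V)
    (hV : riNorm N volume (fun x => ∑ i, |V x i|) < ⊤)
    (c : ℕ → Euc n) (r : ℕ → ℝ) (hr : ∀ k, 0 < r k)
    (hmono : ∀ k, Metric.ball (c k) (r k) ⊆ Metric.ball (c (k + 1)) (r (k + 1))) :
    (∃ M : ℝ, ∀ k,
      |(volume (Metric.ball (c k) (r k))).toReal⁻¹ * ∫ y in Metric.ball (c k) (r k), u y| ≤ M) ∧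
    ∃ (l : ℝ) (s : ℕ → ℕ), StrictMono s ∧
      Tendsto (fun k =>
        (volume (Metric.ball (c (s k)) (r (s k)))).toReal⁻¹ *
          ∫ y in Metric.ball (c (s k)) (r (s k)), u y) atTop (nhds l) := by
  set ω := (volume (Metric.ball (0 : Euc n) 1)).toReal with hω_def
  have hω : 0 < ω :=
    ENNReal.toReal_pos (Metric.measure_ball_pos volume _ one_pos).ne' measure_ball_lt_top.ne
  have hA := lintegral_growth_lt_top hn hX (rearrE_antitone _ _).measurable hV hω (hr 0)
  set A := ∫⁻ t in Ioi (r 0), ENNReal.ofReal (t ^ n)⁻¹ *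
    ∫⁻ s in Ioo 0 (ω * t ^ n), rearr volume (fun x => ∑ i, |V x i|) s
  have hsub : ∀ k, Metric.ball (c 0) (r 0) ⊆ Metric.ball (c k) (r k) := fun k =>
    monotone_nat_of_le_succ (f := fun k => Metric.ball (c k) (r k)) hmono (Nat.zero_le k)
  set q : ℕ → ℝ := fun k => (r k ^ n)⁻¹ * ∫ y in Metric.ball (c k) (r k), u y with hq
  have hmean : ∀ k, (volume (Metric.ball (c k) (r k))).toReal⁻¹ *
      ∫ y in Metric.ball (c k) (r k), u y = ω⁻¹ * q k := by
    intro k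
    have := hr k
    rw [volume_ball_eq hn _ (hr k), ENNReal.toReal_ofReal (by positivity), mul_inv, mul_assoc]
  have hbdd : ∀ k, |(volume (Metric.ball (c k) (r k))).toReal⁻¹ *
      ∫ y in Metric.ball (c k) (r k), u y| ≤ ω⁻¹ * (|q 0| + (2 * A).toReal) := by
    intro k
    have h1 : |q k - q 0| ≤ (2 * A).toReal := mean_sub_le hn hu hV (hr 0) (hsub k) hA le_rfl
    rw [hmean, abs_mul, abs_of_pos (inv_pos.2 hω)]
    gcongr
    have := abs_sub_abs_le_abs_sub (q k) (q 0)
    linarith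
  refine ⟨⟨_, hbdd⟩, ?_⟩
  obtain ⟨l, -, s, hs, hl⟩ := tendsto_subseq_of_bounded
    (Metric.isBounded_closedBall (x := (0 : ℝ)) (r := ω⁻¹ * (|q 0| + (2 * A).toReal)))
    (fun k => mem_closedBall_zero_iff.2 (hbdd k))
  exact ⟨l, s, hs, hl⟩
end
end
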